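/- arXiv:2205.05068 — 4 statements merged into one kernel-verified Lean document; each statement's English description precedes it below -/
import Mathlib

section
/- Communication-rate converse bound: under the converse setup, log|𝒲| ≥ Σ_{i=1}^n I(U_i; X̃_i | Y_i). -/
open MeasureTheory

noncomputable section

/-- Probability mass `P[X = x]` of a finitely-valued random variable `X` on `(Ω, μ)`. -/
def pmass {Ω : Type*} [MeasurableSpace Ω] (μ : Measure Ω) {α : Type*}
    (X : Ω → α) (x : α) : ℝ :=
  (μ (X ⁻¹' {x})).toReal

/-- Shannon entropy `H(X)` (in nats) of a finitely-valued random variable. -/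
def entropyRV {Ω : Type*} [MeasurableSpace Ω] (μ : Measure Ω) {α : Type*} [Fintype α]
    (X : Ω → α) : ℝ :=
  ∑ x : α, Real.negMulLog (pmass μ X x)

/-- Conditional Shannon entropy `H(X | Y)`. -/
def condEntropyRV {Ω : Type*} [MeasurableSpace Ω] (μ : Measure Ω) {α β : Type*}
    [Fintype α] [Fintype β] (X : Ω → α) (Y : Ω → β) : ℝ :=
  entropyRV μ (fun ω => (X ω, Y ω)) - entropyRV μ Y

/-- Mutual information `I(X;Y)`. -/
def mutualInfoRV {Ω : Type*} [MeasurableSpace Ω] (μ : Measure Ω) {α β : Type*}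
    [Fintype α] [Fintype β] (X : Ω → α) (Y : Ω → β) : ℝ :=
  entropyRV μ X + entropyRV μ Y - entropyRV μ (fun ω => (X ω, Y ω))

/-- Conditional mutual information `I(X;Y|Z)`. -/
def condMutualInfoRV {Ω : Type*} [MeasurableSpace Ω] (μ : Measure Ω) {α β γ : Type*}
    [Fintype α] [Fintype β] [Fintype γ] (X : Ω → α) (Y : Ω → β) (Z : Ω → γ) : ℝ :=
  entropyRV μ (fun ω => (X ω, Z ω)) + entropyRV μ (fun ω => (Y ω, Z ω))
    - entropyRV μ Z - entropyRV μ (fun ω => (X ω, Y ω, Z ω))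

/-- Expected value `E[f(X)]` of a function of a finitely-valued random variable. -/
def expVal {Ω : Type*} [MeasurableSpace Ω] (μ : Measure Ω) {α : Type*} [Fintype α]
    (X : Ω → α) (f : α → ℝ) : ℝ :=
  ∑ a : α, pmass μ X a * f a

/-- Independence of two finitely-valued random variables, via their joint mass. -/
def IndepRV {Ω : Type*} [MeasurableSpace Ω] (μ : Measure Ω) {α β : Type*}
    (X : Ω → α) (Y : Ω → β) : Prop :=
  ∀ a b, pmass μ (fun ω => (X ω, Y ω)) (a, b) = pmass μ X a * pmass μ Y b

/-- Conditional independence of `A` and `C` given `B` (the Markov chain `A − B − C`)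
for finitely-valued random variables, via joint masses. -/
def CondIndepRV {Ω : Type*} [MeasurableSpace Ω] (μ : Measure Ω) {α β γ : Type*}
    (A : Ω → α) (B : Ω → β) (C : Ω → γ) : Prop :=
  ∀ a b c,
    pmass μ (fun ω => (A ω, B ω, C ω)) (a, b, c) * pmass μ B b
      = pmass μ (fun ω => (A ω, B ω)) (a, b) * pmass μ (fun ω => (B ω, C ω)) (b, c)

/-- `X` is uniformly distributed on its (finite) alphabet. -/
def UniformRV {Ω : Type*} [MeasurableSpace Ω] (μ : Measure Ω) {α : Type*} [Fintype α]
    (X : Ω → α) : Prop :=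
  ∀ x, pmass μ X x = 1 / (Fintype.card α : ℝ)

/-- The sequence `S = (S_1, …, S_n)` is i.i.d. with single-letter pmf `p`. -/
def HasIIDLaw {Ω : Type*} [MeasurableSpace Ω] (μ : Measure Ω) {α : Type*} {n : ℕ}
    (S : Ω → Fin n → α) (p : α → ℝ) : Prop :=
  ∀ v : Fin n → α, pmass μ S v = ∏ i, p (v i)

/-- `[a]⁻ = min {a, 0}`. -/
def negPartR (a : ℝ) : ℝ := min a 0

open Classical in
/-- mass of the fibre of `f` through `v` -/
def fm {T : Type*} [Fintype T] (p : T → ℝ) {α : Type*} (f : T → α) (v : T) : ℝ :=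
  ∑ u, if f u = f v then p u else 0

/-- entropy of `f` under weights `p` -/
def HH {T : Type*} [Fintype T] (p : T → ℝ) {α : Type*} (f : T → α) : ℝ :=
  - ∑ v, p v * Real.log (fm p f v)

lemma fm_congr {T : Type*} [Fintype T] (p : T → ℝ) {α β : Type*} (f : T → α) (g : T → β)
    (v : T) (h : ∀ u, f u = f v ↔ g u = g v) : fm p f v = fm p g v := by
  unfold fm
  exact Finset.sum_congr rfl fun u _ => by classical exact if_congr (h u) rfl rfl

lemma HH_congr {T : Type*} [Fintype T] (p : T → ℝ) {α β : Type*} (f : T → α) (g : T → β)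
    (h : ∀ u v, f u = f v ↔ g u = g v) : HH p f = HH p g := by
  unfold HH
  congr 1
  exact Finset.sum_congr rfl fun v _ => by rw [fm_congr p f g v (fun u => h u v)]

lemma fm_nonneg {T : Type*} [Fintype T] {p : T → ℝ} (hp : ∀ v, 0 ≤ p v) {α : Type*}
    (f : T → α) (v : T) : 0 ≤ fm p f v := by
  unfold fm
  refine Finset.sum_nonneg fun u _ => ?_
  split_ifs
  · exact hp u
  · exact le_rfl

lemma le_fm {T : Type*} [Fintype T] {p : T → ℝ} (hp : ∀ v, 0 ≤ p v) {α : Type*}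
    (f : T → α) (v : T) : p v ≤ fm p f v := by
  classical
  unfold fm
  have := Finset.single_le_sum (f := fun u => if f u = f v then p u else 0) (s := Finset.univ)
    (fun u _ => by split_ifs; exacts [hp u, le_rfl]) (Finset.mem_univ v)
  simpa using this

lemma fm_mono {T : Type*} [Fintype T] {p : T → ℝ} (hp : ∀ v, 0 ≤ p v) {α β : Type*}
    (f : T → α) (g : T → β) (v : T) (h : ∀ u, f u = f v → g u = g v) :
    fm p f v ≤ fm p g v := by
  unfold fm
  refine Finset.sum_le_sum fun u _ => ?_
  by_cases h1 : f u = f v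
  · simp [h1, h u h1]
  · rw [if_neg h1]
    split_ifs
    exacts [hp u, le_rfl]

/-- normalised sum over one fibre is at most one -/
lemma fibre_le_one {T : Type*} [Fintype T] {p : T → ℝ} (hp : ∀ v, 0 ≤ p v) {α : Type*}
    (f : T → α) (a : α) [∀ v, Decidable (f v = a)] :
    ∑ v, (if f v = a then p v / fm p f v else 0) ≤ 1 := by
  by_cases h : ∃ w, f w = a
  · obtain ⟨w, rfl⟩ := h
    have : ∀ v, (if f v = f w then p v / fm p f v else 0)
        = (if f v = f w then p v else 0) / fm p f w := by
      classical
      intro v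
      split_ifs with hv
      · congr 1
        unfold fm; rw [hv]
      · simp
    simp only [this]
    rw [← Finset.sum_div]
    refine le_trans (le_of_eq ?_) (div_self_le_one (fm p f w))
    congr 1
    unfold fm
    exact Finset.sum_congr rfl fun u _ => by split_ifs <;> rfl
  · push Not at h
    simp [h]

lemma HH_submod {T : Type*} [Fintype T] {p : T → ℝ} (hp : ∀ v, 0 ≤ p v) (h1 : ∑ v, p v = 1)
    {α β γ δ : Type*} (P : T → α) (Q : T → β) (Z : T → γ) (R : T → δ)
    (hPZ : ∀ u v, P u = P v → Z u = Z v) (hQZ : ∀ u v, Q u = Q v → Z u = Z v)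
    (hR : ∀ u v, P u = P v → Q u = Q v → R u = R v) :
    HH p Z + HH p R ≤ HH p P + HH p Q := by
  classical
  let PQ : T → α × β := fun v => (P v, Q v)
  have key : ∀ v, p v * (Real.log (fm p P v) + Real.log (fm p Q v) - Real.log (fm p Z v)
      - Real.log (fm p R v)) ≤
      p v * (fm p P v * fm p Q v / (fm p Z v * fm p PQ v)) - p v := by
    intro v
    rcases (hp v).eq_or_lt with h0 | h0
    · simp [← h0]
    have a1 := h0.trans_le (le_fm hp P v)
    have a2 := h0.trans_le (le_fm hp Q v)
    have a3 := h0.trans_le (le_fm hp Z v)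
    have a4 := h0.trans_le (le_fm hp R v)
    have a5 := h0.trans_le (le_fm hp PQ v)
    have m : fm p PQ v ≤ fm p R v := fm_mono hp _ _ _ (fun u hu => by
      simp only [PQ, Prod.mk.injEq] at hu
      exact hR u v hu.1 hu.2)
    have l := Real.log_le_log a5 m
    have e : Real.log (fm p P v * fm p Q v / (fm p Z v * fm p PQ v)) =
      Real.log (fm p P v) + Real.log (fm p Q v) - (Real.log (fm p Z v)
      + Real.log (fm p PQ v)) := by
      rw [Real.log_div (by positivity) (by positivity), Real.log_mul a1.ne' a2.ne',
        Real.log_mul a3.ne' a5.ne']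
    have b := Real.log_le_sub_one_of_pos
      (show 0 < fm p P v * fm p Q v / (fm p Z v * fm p PQ v) by positivity)
    nlinarith
  have bound : ∑ v, p v * (fm p P v * fm p Q v / (fm p Z v * fm p PQ v)) ≤ 1 := by
    calc ∑ v, p v * (fm p P v * fm p Q v / (fm p Z v * fm p PQ v))
        = ∑ v, ∑ u, ∑ w, (if P u = P v then p u else 0) * (if Q w = Q v then p w else 0) *
            (p v / (fm p Z v * fm p PQ v)) := by
          refine Finset.sum_congr rfl fun v _ => ?_
          have : fm p P v * fm p Q v = ∑ u, ∑ w, (if P u = P v then p u else 0) *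
            (if Q w = Q v then p w else 0) := by
            unfold fm; rw [Finset.sum_mul_sum]
          simp only [← Finset.sum_mul]
          rw [← this]; ring
      _ = ∑ u, ∑ w, ∑ v, (if P u = P v then p u else 0) * (if Q w = Q v then p w else 0) *
            (p v / (fm p Z v * fm p PQ v)) := by
          rw [Finset.sum_comm]
          exact Finset.sum_congr rfl fun u _ => Finset.sum_comm
      _ ≤ ∑ u, ∑ w, p u * (if Z w = Z u then p w else 0) / fm p Z u := by
          refine Finset.sum_le_sum fun u _ => Finset.sum_le_sum fun w _ => ?_
          have e : ∀ v, (if P u = P v then p u else 0) * (if Q w = Q v then p w else 0) *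
            (p v / (fm p Z v * fm p PQ v)) = (p u * (if Z w = Z u then p w else 0) / fm p Z u) *
              (if PQ v = (P u, Q w) then p v / fm p PQ v else 0) := by
            intro v
            by_cases c1 : P u = P v
            · by_cases c2 : Q w = Q v
              · have z1 := hPZ _ _ c1
                have z2 := hQZ _ _ c2
                have : fm p Z v = fm p Z u := by unfold fm; simp [z1]
                rw [if_pos c1, if_pos c2, if_pos (z2.trans z1.symm), if_pos (by simp [PQ, c1, c2]),
                  this]
                simp only [div_eq_mul_inv, mul_inv]; ring
              · rw [if_neg c2, if_neg (fun h => c2 (congrArg Prod.snd h).symm)]; simp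
            · rw [if_neg c1, if_neg (fun h => c1 (congrArg Prod.fst h).symm)]; simp
          simp only [e]
          rw [← Finset.mul_sum]
          refine mul_le_of_le_one_right ?_ (fibre_le_one hp PQ _)
          refine div_nonneg (mul_nonneg (hp u) ?_) (fm_nonneg hp _ _)
          split_ifs
          exacts [hp w, le_rfl]
      _ = ∑ u, p u * (fm p Z u / fm p Z u) := by
          refine Finset.sum_congr rfl fun u _ => ?_
          rw [← Finset.sum_div, ← Finset.mul_sum, mul_div_assoc]
          rfl
      _ ≤ ∑ u, p u := Finset.sum_le_sum fun u _ =>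
          mul_le_of_le_one_right (hp u) (div_self_le_one _)
      _ = 1 := h1
  have s := Finset.sum_le_sum fun v (_ : v ∈ Finset.univ) => key v
  simp only [mul_add, mul_sub, Finset.sum_add_distrib, Finset.sum_sub_distrib, h1] at s
  unfold HH
  linarith

lemma HH_const {T : Type*} [Fintype T] {p : T → ℝ} (h1 : ∑ v, p v = 1) :
    HH p (fun _ : T => ()) = 0 := by
  simp [HH, fm, h1]

lemma HH_le_log {T : Type*} [Fintype T] {p : T → ℝ} (hp : ∀ v, 0 ≤ p v) (h1 : ∑ v, p v = 1)
    {α : Type*} [Fintype α] (f : T → α) : HH p f ≤ Real.log (Fintype.card α) := by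
  classical
  have hne : Nonempty T := by
    by_contra h
    rw [not_nonempty_iff] at h
    simp at h1
  have : Nonempty α := hne.map f
  have hN : (0 : ℝ) < Fintype.card α := by exact_mod_cast Fintype.card_pos
  have key : ∀ v, - (p v * Real.log (fm p f v)) - p v * Real.log (Fintype.card α)
      ≤ (p v / fm p f v) / Fintype.card α - p v := by
    intro v
    rcases (hp v).eq_or_lt with h0 | h0
    · simp [← h0]
    have a1 := h0.trans_le (le_fm hp f v)
    have b := Real.log_le_sub_one_of_pos
      (show 0 < (fm p f v * Fintype.card α)⁻¹ by positivity)
    rw [Real.log_inv, Real.log_mul a1.ne' hN.ne'] at b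
    have e : (p v / fm p f v) / Fintype.card α = p v * (fm p f v * Fintype.card α)⁻¹ := by
      rw [div_div]; rfl
    rw [e]
    nlinarith
  have s := Finset.sum_le_sum fun v (_ : v ∈ Finset.univ) => key v
  simp only [Finset.sum_sub_distrib, h1, Finset.sum_neg_distrib, ← Finset.sum_mul,
    ← Finset.sum_div] at s
  have c : ∑ v, p v / fm p f v ≤ Fintype.card α := by
    calc ∑ v, p v / fm p f v = ∑ v, ∑ a, (if f v = a then p v / fm p f v else 0) := by simp
      _ = ∑ a, ∑ v, (if f v = a then p v / fm p f v else 0) := Finset.sum_comm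
      _ ≤ ∑ a : α, (1 : ℝ) := Finset.sum_le_sum fun a _ => fibre_le_one hp f a
      _ = _ := by simp
  have d : (∑ v, p v / fm p f v) / Fintype.card α ≤ 1 := (div_le_one hN).2 c
  unfold HH
  linarith

lemma HH_indep {T : Type*} [Fintype T] {p : T → ℝ} (hp : ∀ v, 0 ≤ p v) (h1 : ∑ v, p v = 1)
    {α β : Type*} (B : T → α) (C : T → β) (φ : T × T → T × T) (hφ : Function.Involutive φ)
    (hφp : ∀ x, p (φ x).1 * p (φ x).2 = p x.1 * p x.2)
    (hB : ∀ x, B (φ x).1 = B x.1) (hC : ∀ x, C (φ x).1 = C x.2) :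
    HH p (fun v => (B v, C v)) = HH p B + HH p C := by
  classical
  have e : ∀ v, fm p B v * fm p C v = fm p (fun v => (B v, C v)) v := by
    intro v
    calc fm p B v * fm p C v
        = ∑ x : T × T, (if B x.1 = B v then p x.1 else 0) * (if C x.2 = C v then p x.2 else 0) := by
          unfold fm; rw [Finset.sum_mul_sum, Fintype.sum_prod_type]
      _ = ∑ x : T × T, (fun x : T × T =>
            (if (B x.1, C x.1) = (B v, C v) then p x.1 else 0) * p x.2) (hφ.toPerm φ x) := by
          refine Finset.sum_congr rfl fun x _ => ?_
          simp only [Function.Involutive.coe_toPerm, hB, hC, Prod.mk.injEq]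
          by_cases c1 : B x.1 = B v <;> by_cases c2 : C x.2 = C v <;> simp [c1, c2, hφp]
      _ = ∑ x : T × T, (if (B x.1, C x.1) = (B v, C v) then p x.1 else 0) * p x.2 :=
          Equiv.sum_comp (hφ.toPerm φ) (fun x : T × T =>
            (if (B x.1, C x.1) = (B v, C v) then p x.1 else 0) * p x.2)
      _ = _ := by
          rw [Fintype.sum_prod_type]
          simp only [← Finset.mul_sum, h1, mul_one]
          unfold fm
          exact Finset.sum_congr rfl fun u _ => by split_ifs <;> rfl
  have k : ∀ v, p v * Real.log (fm p (fun v => (B v, C v)) v)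
      = p v * Real.log (fm p B v) + p v * Real.log (fm p C v) := by
    intro v
    rcases (hp v).eq_or_lt with h0 | h0
    · simp [← h0]
    have a1 := h0.trans_le (le_fm hp B v)
    have a2 := h0.trans_le (le_fm hp C v)
    rw [← e, Real.log_mul a1.ne' a2.ne', mul_add]
  unfold HH
  simp only [k, Finset.sum_add_distrib]
  ring

lemma entropyRV_eq_HH {Ω T : Type*} [MeasurableSpace Ω] (μ : Measure Ω) [IsProbabilityMeasure μ]
    [Fintype T] [MeasurableSpace T] [MeasurableSingletonClass T] (V : Ω → T) (hV : Measurable V)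
    {α : Type*} [Fintype α] (g : T → α) :
    entropyRV μ (fun ω => g (V ω)) = HH (pmass μ V) g := by
  classical
  have h : ∀ a, pmass μ (fun ω => g (V ω)) a = ∑ v, if g v = a then pmass μ V v else 0 := by
    intro a
    rw [← Finset.sum_filter]
    unfold pmass
    rw [← ENNReal.toReal_sum (fun _ _ => measure_ne_top _ _),
      sum_measure_preimage_singleton _ (fun y _ => hV (measurableSet_singleton y))]
    congr 2
    ext ω
    simp
  unfold entropyRV HH
  calc ∑ a, Real.negMulLog (pmass μ (fun ω => g (V ω)) a)
      = ∑ a, ∑ v, -(if g v = a then pmass μ V v * Real.log (fm (pmass μ V) g v) else 0) := by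
        refine Finset.sum_congr rfl fun a _ => ?_
        rw [Real.negMulLog, Finset.sum_neg_distrib, neg_mul]
        congr 1
        conv_lhs => rw [h a, Finset.sum_mul]
        refine Finset.sum_congr rfl fun v _ => ?_
        split_ifs with c
        · unfold fm; simp only [c]
        · simp
    _ = ∑ v, ∑ a, -(if g v = a then pmass μ V v * Real.log (fm (pmass μ V) g v) else 0) :=
        Finset.sum_comm
    _ = _ := by simp

lemma sum_pmass {Ω T : Type*} [MeasurableSpace Ω] (μ : Measure Ω) [IsProbabilityMeasure μ]
    [Fintype T] [MeasurableSpace T] [MeasurableSingletonClass T] (V : Ω → T) (hV : Measurable V) :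
    ∑ v, pmass μ V v = 1 := by
  unfold pmass
  rw [← ENNReal.toReal_sum (fun _ _ => measure_ne_top _ _),
    sum_measure_preimage_singleton _ (fun y _ => hV (measurableSet_singleton y))]
  simp

section core
variable {A X Y Z W K : Type}

/-- `(K, S_{<i}, Y_{≥ i})` -/
def cA {n : ℕ} (i : ℕ) (v : K × (Fin n → A × X × Y × Z)) : K × (Fin n → (A × X × Y × Z) ⊕ Y) :=
  (v.1, fun j => if j.1 < i then Sum.inl (v.2 j) else Sum.inr (v.2 j).2.2.1)

/-- `(K, S_{<i}, Y_{> i})` -/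
def cB {n : ℕ} (i : ℕ) (v : K × (Fin n → A × X × Y × Z)) :
    K × (Fin n → Option ((A × X × Y × Z) ⊕ Y)) :=
  (v.1, fun j => if j.1 < i then some (Sum.inl (v.2 j)) else
    if i < j.1 then some (Sum.inr (v.2 j).2.2.1) else none)

lemma cA_iff {n : ℕ} (i : ℕ) (u v : K × (Fin n → A × X × Y × Z)) :
    cA i u = cA i v ↔ u.1 = v.1 ∧ (∀ j : Fin n, j.1 < i → u.2 j = v.2 j) ∧
      (∀ j : Fin n, i ≤ j.1 → (u.2 j).2.2.1 = (v.2 j).2.2.1) := by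
  simp only [cA, Prod.mk.injEq, funext_iff]
  refine and_congr Iff.rfl ⟨fun h => ⟨fun j hj => ?_, fun j hj => ?_⟩, fun h j => ?_⟩
  · simpa [hj] using h j
  · simpa [not_lt.2 hj] using h j
  · by_cases hj : j.1 < i
    · simp [hj, h.1 j hj]
    · simp [hj, h.2 j (not_lt.1 hj)]

lemma cB_iff {n : ℕ} (i : ℕ) (u v : K × (Fin n → A × X × Y × Z)) :
    cB i u = cB i v ↔ u.1 = v.1 ∧ (∀ j : Fin n, j.1 < i → u.2 j = v.2 j) ∧
      (∀ j : Fin n, i < j.1 → (u.2 j).2.2.1 = (v.2 j).2.2.1) := by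
  simp only [cB, Prod.mk.injEq, funext_iff]
  refine and_congr Iff.rfl ⟨fun h => ⟨fun j hj => ?_, fun j hj => ?_⟩, fun h j => ?_⟩
  · simpa [hj] using h j
  · simpa [hj, hj.le, not_lt.2 hj.le] using h j
  · by_cases hj : j.1 < i
    · simp [hj, h.1 j hj]
    · by_cases hj' : i < j.1
      · simp [hj, hj', h.2 j hj']
      · simp [hj, hj']

lemma cA_iff_B {n : ℕ} (i : Fin n) (u v : K × (Fin n → A × X × Y × Z)) :
    cA i.1 u = cA i.1 v ↔ cB i.1 u = cB i.1 v ∧ (u.2 i).2.2.1 = (v.2 i).2.2.1 := by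
  rw [cA_iff, cB_iff]
  constructor
  · rintro ⟨h1, h2, h3⟩
    exact ⟨⟨h1, h2, fun j hj => h3 j hj.le⟩, h3 i le_rfl⟩
  · rintro ⟨⟨h1, h2, h3⟩, h4⟩
    refine ⟨h1, h2, fun j hj => ?_⟩
    rcases hj.eq_or_lt with h | h
    · rw [← Fin.ext h]; exact h4
    · exact h3 j h

lemma cA_succ_iff_B {n : ℕ} (i : Fin n) (u v : K × (Fin n → A × X × Y × Z)) :
    cA (i.1 + 1) u = cA (i.1 + 1) v ↔ cB i.1 u = cB i.1 v ∧ u.2 i = v.2 i := by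
  rw [cA_iff, cB_iff]
  constructor
  · rintro ⟨h1, h2, h3⟩
    exact ⟨⟨h1, fun j hj => h2 j (by omega), fun j hj => h3 j hj⟩, h2 i (by omega)⟩
  · rintro ⟨⟨h1, h2, h3⟩, h4⟩
    refine ⟨h1, fun j hj => ?_, fun j hj => h3 j hj⟩
    rcases (Nat.lt_succ_iff.1 hj).eq_or_lt with h | h
    · rw [Fin.ext h]; exact h4
    · exact h2 j h

/-- swap the `i`-th letters of a pair -/
def swp {n : ℕ} {D : Type} (i : Fin n) (x : (K × (Fin n → D)) × (K × (Fin n → D))) :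
    (K × (Fin n → D)) × (K × (Fin n → D)) :=
  ((x.1.1, Function.update x.1.2 i (x.2.2 i)), (x.2.1, Function.update x.2.2 i (x.1.2 i)))

lemma swp_inv {n : ℕ} {D : Type} (i : Fin n) :
    Function.Involutive (swp (K := K) (D := D) i) := by
  rintro ⟨⟨k, s⟩, ⟨l, t⟩⟩
  simp [swp]

lemma swp_p {n : ℕ} {D : Type} (i : Fin n) (pK : K → ℝ) (q : D → ℝ)
    (p : K × (Fin n → D) → ℝ) (hp : ∀ v, p v = pK v.1 * ∏ j, q (v.2 j)) (x) :
    p (swp i x).1 * p (swp i x).2 = p x.1 * p x.2 := by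
  obtain ⟨⟨k, s⟩, ⟨l, t⟩⟩ := x
  simp only [hp, swp]
  have e : (∏ j, q (Function.update s i (t i) j)) * (∏ j, q (Function.update t i (s i) j))
      = (∏ j, q (s j)) * ∏ j, q (t j) := by
    rw [← Finset.prod_mul_distrib, ← Finset.prod_mul_distrib]
    refine Finset.prod_congr rfl fun j _ => ?_
    by_cases h : j = i
    · subst h; simp [mul_comm]
    · simp [h]
  linear_combination (pK k * pK l) * e

lemma cB_swp {n : ℕ} (i : Fin n) (x : (K × (Fin n → A × X × Y × Z)) × (K × (Fin n → A × X × Y × Z))) :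
    cB i.1 (swp i x).1 = cB i.1 x.1 := by
  rw [cB_iff]
  refine ⟨rfl, fun j hj => ?_, fun j hj => ?_⟩
  · have : j ≠ i := by rintro rfl; omega
    simp [swp, this]
  · have : j ≠ i := by rintro rfl; omega
    simp [swp, this]

lemma core_step [Fintype A] [Fintype X] [Fintype Y] [Fintype Z] [Fintype K] {n : ℕ}
    (p : K × (Fin n → A × X × Y × Z) → ℝ) (hp : ∀ v, 0 ≤ p v) (h1 : ∑ v, p v = 1)
    (pK : K → ℝ) (q : A × X × Y × Z → ℝ) (hpq : ∀ v, p v = pK v.1 * ∏ j, q (v.2 j))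
    (w : K × (Fin n → A × X × Y × Z) → W) (i : Fin n) {γ : Type}
    (U : K × (Fin n → A × X × Y × Z) → γ)
    (hU : ∀ u v, w u = w v → cB i.1 u = cB i.1 v → U u = U v) :
    HH p (fun v => (U v, (v.2 i).2.2.1)) + HH p (fun v => ((v.2 i).1, (v.2 i).2.2.1))
      - HH p (fun v => (v.2 i).2.2.1) - HH p (fun v => (U v, (v.2 i).1, (v.2 i).2.2.1))
    ≤ (HH p (fun v => (w v, cA i.1 v)) - HH p (cA i.1))
      - (HH p (fun v => (w v, cA (i.1 + 1) v)) - HH p (cA (i.1 + 1))) := by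
  have i1 : HH p (cA i.1) = HH p (cB i.1) + HH p (fun v => (v.2 i).2.2.1) := by
    rw [← HH_indep hp h1 _ _ (swp i) (swp_inv i) (swp_p i pK q p hpq) (cB_swp i)
      (by intro x; simp [swp])]
    exact HH_congr _ _ _ fun u v => by rw [cA_iff_B]; simp
  have i2 : HH p (cA (i.1 + 1)) = HH p (cB i.1) + HH p (fun v => v.2 i) := by
    rw [← HH_indep hp h1 _ _ (swp i) (swp_inv i) (swp_p i pK q p hpq) (cB_swp i)
      (by intro x; simp [swp])]
    exact HH_congr _ _ _ fun u v => by rw [cA_succ_iff_B]; simp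
  have s1 := HH_submod hp h1 (fun v => (w v, cB i.1 v, (v.2 i).1, (v.2 i).2.2.1))
    (fun v => v.2 i) (fun v => ((v.2 i).1, (v.2 i).2.2.1)) (fun v => (w v, cA (i.1 + 1) v))
    (fun u v h => by simp only [Prod.mk.injEq] at h ⊢; tauto)
    (fun u v h => by
      have h : u.2 i = v.2 i := h
      simp only [h])
    (fun u v h h' => by
      simp only [Prod.mk.injEq, cA_succ_iff_B] at h h' ⊢; tauto)
  have s2 := HH_submod hp h1 (fun v => (w v, cA i.1 v))
    (fun v => (U v, (v.2 i).1, (v.2 i).2.2.1)) (fun v => (U v, (v.2 i).2.2.1))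
    (fun v => (w v, cB i.1 v, (v.2 i).1, (v.2 i).2.2.1))
    (fun u v h => by
      simp only [Prod.mk.injEq, cA_iff_B] at h ⊢
      exact ⟨hU u v h.1 h.2.1, h.2.2⟩)
    (fun u v h => by simp only [Prod.mk.injEq] at h ⊢; tauto)
    (fun u v h h' => by
      simp only [Prod.mk.injEq, cA_iff_B] at h h' ⊢; tauto)
  linarith

end core

/-- **Communication-rate converse bound**: under the converse setup (i.i.d. remote
source measurements, uniform private key independent of the source, encoder output
`W = enc(X̃ⁿ, K)`, and auxiliaries `Uᵢ = (W, Y_{i+1}ⁿ, Z^{i−1}, X^{i−1}, K)`),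
`log |𝒲| ≥ ∑ᵢ I(Uᵢ; X̃ᵢ | Yᵢ)`. -/
theorem communication_rate_converse
    {𝒳 𝒳t 𝒴 𝒵 𝒲 𝒦 : Type}
    [Fintype 𝒳] [Fintype 𝒳t] [Fintype 𝒴] [Fintype 𝒵] [Fintype 𝒲] [Fintype 𝒦]
    [MeasurableSpace 𝒳] [DiscreteMeasurableSpace 𝒳]
    [MeasurableSpace 𝒳t] [DiscreteMeasurableSpace 𝒳t]
    [MeasurableSpace 𝒴] [DiscreteMeasurableSpace 𝒴]
    [MeasurableSpace 𝒵] [DiscreteMeasurableSpace 𝒵]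
    [MeasurableSpace 𝒲] [DiscreteMeasurableSpace 𝒲]
    [MeasurableSpace 𝒦] [DiscreteMeasurableSpace 𝒦]
    {Ω : Type} [MeasurableSpace Ω] (μ : MeasureTheory.Measure Ω)
    [MeasureTheory.IsProbabilityMeasure μ]
    {n : ℕ} (S : Ω → Fin n → 𝒳t × 𝒳 × 𝒴 × 𝒵) (K : Ω → 𝒦)
    (hSmeas : Measurable S) (hKmeas : Measurable K)
    (pX : 𝒳 → ℝ) (pXt : 𝒳 → 𝒳t → ℝ) (pYZ : 𝒳 → 𝒴 × 𝒵 → ℝ)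
    (hpX0 : ∀ x, 0 ≤ pX x) (hpX1 : ∑ x, pX x = 1)
    (hpXt0 : ∀ x a, 0 ≤ pXt x a) (hpXt1 : ∀ x, ∑ a, pXt x a = 1)
    (hpYZ0 : ∀ x yz, 0 ≤ pYZ x yz) (hpYZ1 : ∀ x, ∑ yz, pYZ x yz = 1)
    (hiid : HasIIDLaw μ S (fun s => pX s.2.1 * pXt s.2.1 s.1 * pYZ s.2.1 s.2.2))
    (hKunif : UniformRV μ K) (hKind : IndepRV μ K S)
    (enc : (Fin n → 𝒳t) → 𝒦 → 𝒲)
    :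
    Real.log (Fintype.card 𝒲 : ℝ) ≥ ∑ i : Fin n,
      condMutualInfoRV μ
        (fun ω => (enc (fun j => (S ω j).1) (K ω),
          (fun j : {j : Fin n // i < j} => (S ω j.1).2.2.1),
          (fun j : {j : Fin n // j.1 < i} => (S ω j.1).2.2.2),
          (fun j : {j : Fin n // j.1 < i} => (S ω j.1).2.1),
          K ω))
        (fun ω => (S ω i).1)
        (fun ω => (S ω i).2.2.1) := by
  set V : Ω → 𝒦 × (Fin n → 𝒳t × 𝒳 × 𝒴 × 𝒵) := fun ω => (K ω, S ω) with hVdef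
  have hV : Measurable V := hKmeas.prodMk hSmeas
  set p := pmass μ V with hpdef
  have hp : ∀ v, 0 ≤ p v := fun v => ENNReal.toReal_nonneg
  have h1 : ∑ v, p v = 1 := sum_pmass μ V hV
  have hpq : ∀ v, p v = pmass μ K v.1 *
      ∏ j, (fun s : 𝒳t × 𝒳 × 𝒴 × 𝒵 => pX s.2.1 * pXt s.2.1 s.1 * pYZ s.2.1 s.2.2) (v.2 j) := by
    rintro ⟨k, s⟩
    rw [← hiid s]
    exact hKind k s
  let w : 𝒦 × (Fin n → 𝒳t × 𝒳 × 𝒴 × 𝒵) → 𝒲 := fun v => enc (fun j => (v.2 j).1) v.1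
  let F : ℕ → ℝ := fun i => HH p (fun v => (w v, cA i v)) - HH p (cA i)
  have hstep : ∀ i : Fin n, condMutualInfoRV μ
        (fun ω => (enc (fun j => (S ω j).1) (K ω),
          (fun j : {j : Fin n // i < j} => (S ω j.1).2.2.1),
          (fun j : {j : Fin n // j.1 < i} => (S ω j.1).2.2.2),
          (fun j : {j : Fin n // j.1 < i} => (S ω j.1).2.1),
          K ω))
        (fun ω => (S ω i).1)
        (fun ω => (S ω i).2.2.1) ≤ F i.1 - F (i.1 + 1) := by
    intro i
    let U := fun v : 𝒦 × (Fin n → 𝒳t × 𝒳 × 𝒴 × 𝒵) => (w v,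
          (fun j : {j : Fin n // i < j} => (v.2 j.1).2.2.1),
          (fun j : {j : Fin n // j.1 < i} => (v.2 j.1).2.2.2),
          (fun j : {j : Fin n // j.1 < i} => (v.2 j.1).2.1),
          v.1)
    have hU : ∀ u v, w u = w v → cB i.1 u = cB i.1 v → U u = U v := by
      intro u v hw hb
      rw [cB_iff] at hb
      obtain ⟨b1, b2, b3⟩ := hb
      simp only [U, Prod.mk.injEq]
      refine ⟨hw, funext fun j => b3 j.1 j.2, funext fun j => ?_, funext fun j => ?_, b1⟩
      · rw [b2 j.1 j.2]
      · rw [b2 j.1 j.2]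
    have := core_step p hp h1 (pmass μ K)
      (fun s : 𝒳t × 𝒳 × 𝒴 × 𝒵 => pX s.2.1 * pXt s.2.1 s.1 * pYZ s.2.1 s.2.2) hpq w i U hU
    have e1 := entropyRV_eq_HH μ V hV (fun v => (U v, (v.2 i).2.2.1))
    have e2 := entropyRV_eq_HH μ V hV (fun v => ((v.2 i).1, (v.2 i).2.2.1))
    have e3 := entropyRV_eq_HH μ V hV (fun v => (v.2 i).2.2.1)
    have e4 := entropyRV_eq_HH μ V hV (fun v => (U v, (v.2 i).1, (v.2 i).2.2.1))
    rw [← e1, ← e2, ← e3, ← e4] at this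
    exact this
  have hsum := Finset.sum_le_sum fun i (_ : i ∈ Finset.univ) => hstep i
  rw [Fin.sum_univ_eq_sum_range (fun i => F i - F (i + 1)) n, Finset.sum_range_sub'] at hsum
  have hFn : F n = 0 := by
    refine sub_eq_zero.2 (HH_congr _ _ _ fun u v => ?_)
    simp only [Prod.mk.injEq, and_iff_right_iff_imp]
    intro h
    rw [cA_iff] at h
    have : u = v := Prod.ext h.1 (funext fun j => h.2.1 j j.2)
    rw [this]
  have hF0 : F 0 ≤ Real.log (Fintype.card 𝒲 : ℝ) := by
    have a := HH_submod hp h1 w (cA 0) (fun _ => ()) (fun v => (w v, cA 0 v))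
      (fun _ _ _ => rfl) (fun _ _ _ => rfl) (fun u v h h' => by simp only [h, h'])
    rw [HH_const h1] at a
    have b := HH_le_log hp h1 w
    simp only [F]
    linarith
  linarith
end
end

section
/- Privacy-leakage converse bound (small key regime): under the converse setup, I(X^n; W | Z^n) ≥ Σ_{i=1}^n ( I(U_i; X_i | Z_i) + [I(U_i; Z_i | V_i) − I(U_i; Y_i | V_i)]^- ) − H(K). -/
open MeasureTheory

noncomputable section

section Helpers

def MSet {Ω : Type*} [MeasurableSpace Ω] {α : Type*} (A : Ω → α) : Prop :=
  ∀ s : Set α, MeasurableSet (A ⁻¹' s)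

lemma MSet.comp {Ω : Type*} [MeasurableSpace Ω] {α β : Type*} {A : Ω → α} (h : MSet A)
    (g : α → β) : MSet (fun ω => g (A ω)) := fun s => h (g ⁻¹' s)

lemma pmass_nonneg' {Ω : Type*} [MeasurableSpace Ω] (μ : Measure Ω) {α : Type*}
    (A : Ω → α) (a : α) : 0 ≤ pmass μ A a := ENNReal.toReal_nonneg

open Classical in
lemma pmass_comp {Ω : Type*} [MeasurableSpace Ω] (μ : Measure Ω) [IsProbabilityMeasure μ]
    {α β : Type*} [Fintype α] {A : Ω → α} (h : MSet A) (g : α → β) (b : β) :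
    pmass μ (fun ω => g (A ω)) b = ∑ a with g a = b, pmass μ A a := by
  unfold pmass
  rw [← ENNReal.toReal_sum (fun a _ => measure_ne_top μ _)]
  congr 1
  rw [← measure_biUnion_finset]
  · congr 1
    ext ω
    simp
  · intro a _ a' _ hne
    refine Set.disjoint_left.2 fun ω h1 h2 => hne ?_
    simp at h1 h2
    rw [← h1, ← h2]
  · intro a _
    exact h _

lemma sum_pmass_s6 {Ω : Type*} [MeasurableSpace Ω] (μ : Measure Ω) [IsProbabilityMeasure μ]
    {α : Type*} [Fintype α] {A : Ω → α} (h : MSet A) : ∑ a, pmass μ A a = 1 := by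
  classical
  have := pmass_comp μ h (fun _ => ()) ()
  simp [pmass] at this
  simpa [pmass] using this.symm

lemma entropy_comp_le {Ω : Type*} [MeasurableSpace Ω] (μ : Measure Ω) [IsProbabilityMeasure μ]
    {α β : Type*} [Fintype α] [Fintype β] {A : Ω → α} (h : MSet A) (g : α → β) :
    entropyRV μ (fun ω => g (A ω)) ≤ entropyRV μ A := by
  classical
  unfold entropyRV
  rw [← Finset.sum_fiberwise (s := Finset.univ) (g := g)]
  refine Finset.sum_le_sum fun b _ => ?_
  rw [pmass_comp μ h g b, Real.negMulLog, neg_mul, Finset.sum_mul, ← Finset.sum_neg_distrib]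
  refine Finset.sum_le_sum fun a ha => ?_
  rw [Real.negMulLog, neg_mul, neg_le_neg_iff]
  rcases (pmass_nonneg' μ A a).eq_or_lt with h0 | h0
  · rw [← h0]; simp
  · refine mul_le_mul_of_nonneg_left (Real.log_le_log h0 ?_) h0.le
    exact Finset.single_le_sum (f := fun a => pmass μ A a)
      (fun a _ => pmass_nonneg' μ A a) ha

lemma entropy_le_of {Ω : Type*} [MeasurableSpace Ω] (μ : Measure Ω) [IsProbabilityMeasure μ]
    {α β : Type*} [Fintype α] [Fintype β] {A : Ω → α} (h : MSet A) (B : Ω → β)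
    (hAB : ∀ ω ω', A ω = A ω' → B ω = B ω') :
    entropyRV μ B ≤ entropyRV μ A := by
  have hne : Nonempty Ω := nonempty_of_isProbabilityMeasure μ
  have hf : Function.FactorsThrough B A := fun ω ω' h => hAB ω ω' h
  have : B = fun ω => Function.extend A B (fun _ => B hne.some) (A ω) := by
    ext ω
    rw [hf.extend_apply]
  rw [this]
  exact entropy_comp_le μ h _

lemma entropy_congr {Ω : Type*} [MeasurableSpace Ω] (μ : Measure Ω) [IsProbabilityMeasure μ]
    {α β : Type*} [Fintype α] [Fintype β] {A : Ω → α} {B : Ω → β} (hA : MSet A) (hB : MSet B)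
    (hAB : ∀ ω ω', A ω = A ω' ↔ B ω = B ω') :
    entropyRV μ A = entropyRV μ B :=
  le_antisymm (entropy_le_of μ hB A fun ω ω' => (hAB ω ω').2)
    (entropy_le_of μ hA B fun ω ω' => (hAB ω ω').1)

lemma entropy_pair_le {Ω : Type*} [MeasurableSpace Ω] (μ : Measure Ω) [IsProbabilityMeasure μ]
    {α β : Type*} [Fintype α] [Fintype β] {A : Ω → α} {B : Ω → β}
    (h : MSet (fun ω => (A ω, B ω))) :
    entropyRV μ (fun ω => (A ω, B ω)) ≤ entropyRV μ A + entropyRV μ B := by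
  classical
  set p : α → β → ℝ := fun a b => pmass μ (fun ω => (A ω, B ω)) (a, b) with hp
  have hA : ∀ a, pmass μ A a = ∑ b, p a b := by
    intro a
    have := pmass_comp μ h Prod.fst a
    simp only at this
    rw [this, Finset.sum_filter, Fintype.sum_prod_type]
    rw [Finset.sum_eq_single a]
    · simp [hp]
    · intro a' _ hne; simp [hne]
    · simp
  have hB : ∀ b, pmass μ B b = ∑ a, p a b := by
    intro b
    have := pmass_comp μ h Prod.snd b
    simp only at this
    rw [this, Finset.sum_filter, Fintype.sum_prod_type_right]
    rw [Finset.sum_eq_single b]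
    · simp [hp]
    · intro a' _ hne; simp [hne]
    · simp
  have hp0 : ∀ a b, 0 ≤ p a b := fun a b => pmass_nonneg' μ _ _
  have hsA : ∑ a, pmass μ A a = 1 := sum_pmass_s6 μ (h.comp Prod.fst)
  have hsB : ∑ b, pmass μ B b = 1 := sum_pmass_s6 μ (h.comp Prod.snd)
  have hs : ∑ a, ∑ b, p a b = 1 := by simp_rw [← hA]; exact hsA
  have key : ∀ a b, Real.negMulLog (p a b) ≤
      -(p a b * Real.log (pmass μ A a)) - p a b * Real.log (pmass μ B b)
        + (pmass μ A a * pmass μ B b - p a b) := by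
    intro a b
    rcases (hp0 a b).eq_or_lt with h0 | h0
    · rw [← h0]
      simp
      exact mul_nonneg (pmass_nonneg' μ _ _) (pmass_nonneg' μ _ _)
    · have h1 : 0 < pmass μ A a := h0.trans_le (by
        rw [hA]; exact Finset.single_le_sum (f := fun b => p a b) (fun b _ => hp0 a b) (Finset.mem_univ b))
      have h2 : 0 < pmass μ B b := h0.trans_le (by
        rw [hB]; exact Finset.single_le_sum (f := fun a => p a b) (fun a _ => hp0 a b) (Finset.mem_univ a))
      have h3 := Real.log_le_sub_one_of_pos (div_pos (mul_pos h1 h2) h0)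
      rw [Real.log_div (mul_pos h1 h2).ne' h0.ne', Real.log_mul h1.ne' h2.ne'] at h3
      have h4 := mul_le_mul_of_nonneg_left h3 h0.le
      have h5 : p a b * (pmass μ A a * pmass μ B b / p a b - 1)
          = pmass μ A a * pmass μ B b - p a b := by field_simp
      rw [h5] at h4
      rw [Real.negMulLog]
      linarith
  unfold entropyRV
  rw [Fintype.sum_prod_type]
  refine (Finset.sum_le_sum fun a _ => Finset.sum_le_sum fun b _ => key a b).trans ?_
  simp only [Finset.sum_add_distrib, Finset.sum_sub_distrib, Finset.sum_neg_distrib]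
  rw [hs, ← Finset.sum_mul_sum, hsA, hsB]
  rw [Finset.sum_comm (f := fun a b => p a b * Real.log (pmass μ B b))]
  simp_rw [← Finset.sum_mul, ← hA, ← hB, Real.negMulLog, neg_mul, Finset.sum_neg_distrib]
  linarith

open Classical in
lemma iid_map {Ω : Type*} [MeasurableSpace Ω] (μ : Measure Ω) [IsProbabilityMeasure μ]
    {α β : Type*} [Fintype α] {n : ℕ} {S : Ω → Fin n → α} (h : MSet S) {p : α → ℝ}
    (hS : HasIIDLaw μ S p) (f : α → β) :
    HasIIDLaw μ (fun ω j => f (S ω j)) (fun b => ∑ a with f a = b, p a) := by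
  intro b
  rw [pmass_comp μ h (fun v j => f (v j)) b, Finset.prod_univ_sum]
  refine Finset.sum_congr ?_ fun v _ => hS v
  ext v
  simp [Fintype.mem_piFinset, funext_iff]

lemma iid_marg {Ω : Type*} [MeasurableSpace Ω] (μ : Measure Ω) [IsProbabilityMeasure μ]
    {α : Type*} [Fintype α] {n : ℕ} {S : Ω → Fin n → α} (h : MSet S) {p : α → ℝ}
    (hS : HasIIDLaw μ S p) (h1 : ∑ a, p a = 1) (i : Fin n) (a : α) :
    pmass μ (fun ω => S ω i) a = p a := by
  classical
  rw [pmass_comp μ h (fun v => v i) a]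
  have : (Finset.univ.filter fun v : Fin n → α => v i = a)
      = Fintype.piFinset (fun j => if j = i then {a} else Finset.univ) := by
    ext v
    simp only [Finset.mem_filter, Finset.mem_univ, true_and, Fintype.mem_piFinset]
    constructor
    · intro hv j
      by_cases hj : j = i
      · subst hj; simp [hv]
      · simp [hj]
    · intro hv
      simpa using hv i
  rw [this, Finset.sum_congr rfl fun v _ => hS v, ← Finset.prod_univ_sum]
  rw [Finset.prod_eq_single i]
  · simp
  · intro j _ hj; simp [hj, h1]
  · simp

lemma iid_entropy {Ω : Type*} [MeasurableSpace Ω] (μ : Measure Ω) [IsProbabilityMeasure μ]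
    {α : Type*} [Fintype α] {n : ℕ} {S : Ω → Fin n → α} (h : MSet S) {p : α → ℝ}
    (hS : HasIIDLaw μ S p) (h1 : ∑ a, p a = 1) :
    entropyRV μ S = ∑ i, entropyRV μ (fun ω => S ω i) := by
  classical
  have e1 : ∀ v, Real.negMulLog (pmass μ S v) = ∑ i, -(pmass μ S v * Real.log (p (v i))) := by
    intro v
    rw [Finset.sum_neg_distrib, ← Finset.mul_sum, Real.negMulLog, neg_mul, neg_inj]
    by_cases hv : ∃ i, p (v i) = 0
    · obtain ⟨i, hi⟩ := hv
      have : pmass μ S v = 0 := by rw [hS v]; exact Finset.prod_eq_zero (Finset.mem_univ i) hi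
      rw [this]; simp
    · push Not at hv
      congr 1
      rw [hS v, Real.log_prod (fun i _ => hv i)]
  unfold entropyRV
  simp_rw [e1]
  rw [Finset.sum_comm]
  refine Finset.sum_congr rfl fun i _ => ?_
  rw [← Finset.sum_fiberwise (s := Finset.univ) (g := fun v : Fin n → α => v i)]
  refine Finset.sum_congr rfl fun a _ => ?_
  have e2 : ∑ v with v i = a, -(pmass μ S v * Real.log (p (v i)))
      = ∑ v with v i = a, -(pmass μ S v * Real.log (p a)) :=
    Finset.sum_congr rfl fun v hv => by rw [(Finset.mem_filter.1 hv).2]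
  rw [e2, Finset.sum_neg_distrib, ← Finset.sum_mul, ← pmass_comp μ h (fun v => v i) a,
    Real.negMulLog, neg_mul, iid_marg μ h hS h1]

lemma iid_map_entropy {Ω : Type*} [MeasurableSpace Ω] (μ : Measure Ω) [IsProbabilityMeasure μ]
    {α β : Type*} [Fintype α] [Fintype β] {n : ℕ} {S : Ω → Fin n → α} (h : MSet S) {p : α → ℝ}
    (hS : HasIIDLaw μ S p) (h1 : ∑ a, p a = 1) (f : α → β) :
    entropyRV μ (fun ω j => f (S ω j)) = ∑ i, entropyRV μ (fun ω => f (S ω i)) := by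
  classical
  refine iid_entropy μ (h.comp fun v j => f (v j)) (iid_map μ h hS f) ?_
  refine Eq.trans ?_ h1
  convert Finset.sum_fiberwise Finset.univ f p

end Helpers

/-- **Privacy-leakage converse bound (small key regime)**: under the converse setup,
`I(Xⁿ; W | Zⁿ) ≥ ∑ᵢ ( I(Uᵢ; Xᵢ | Zᵢ) + [I(Uᵢ; Zᵢ | Vᵢ) − I(Uᵢ; Yᵢ | Vᵢ)]⁻ ) − H(K)`. -/
theorem privacy_leakage_converse_small_key
    {𝒳 𝒳t 𝒴 𝒵 𝒲 𝒦 : Type}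
    [Fintype 𝒳] [Fintype 𝒳t] [Fintype 𝒴] [Fintype 𝒵] [Fintype 𝒲] [Fintype 𝒦]
    [MeasurableSpace 𝒳] [DiscreteMeasurableSpace 𝒳]
    [MeasurableSpace 𝒳t] [DiscreteMeasurableSpace 𝒳t]
    [MeasurableSpace 𝒴] [DiscreteMeasurableSpace 𝒴]
    [MeasurableSpace 𝒵] [DiscreteMeasurableSpace 𝒵]
    [MeasurableSpace 𝒲] [DiscreteMeasurableSpace 𝒲]
    [MeasurableSpace 𝒦] [DiscreteMeasurableSpace 𝒦]
    {Ω : Type} [MeasurableSpace Ω] (μ : MeasureTheory.Measure Ω)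
    [MeasureTheory.IsProbabilityMeasure μ]
    {n : ℕ} (S : Ω → Fin n → 𝒳t × 𝒳 × 𝒴 × 𝒵) (K : Ω → 𝒦)
    (hSmeas : Measurable S) (hKmeas : Measurable K)
    (pX : 𝒳 → ℝ) (pXt : 𝒳 → 𝒳t → ℝ) (pYZ : 𝒳 → 𝒴 × 𝒵 → ℝ)
    (hpX0 : ∀ x, 0 ≤ pX x) (hpX1 : ∑ x, pX x = 1)
    (hpXt0 : ∀ x a, 0 ≤ pXt x a) (hpXt1 : ∀ x, ∑ a, pXt x a = 1)
    (hpYZ0 : ∀ x yz, 0 ≤ pYZ x yz) (hpYZ1 : ∀ x, ∑ yz, pYZ x yz = 1)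
    (hiid : HasIIDLaw μ S (fun s => pX s.2.1 * pXt s.2.1 s.1 * pYZ s.2.1 s.2.2))
    (hKunif : UniformRV μ K) (hKind : IndepRV μ K S)
    (enc : (Fin n → 𝒳t) → 𝒦 → 𝒲)
    :
    condMutualInfoRV μ (fun ω => fun j => (S ω j).2.1)
      (fun ω => enc (fun j => (S ω j).1) (K ω))
      (fun ω => fun j => (S ω j).2.2.2)
    ≥ (∑ i : Fin n,
        (condMutualInfoRV μ
          (fun ω => (enc (fun j => (S ω j).1) (K ω),
          (fun j : {j : Fin n // i < j} => (S ω j.1).2.2.1),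
          (fun j : {j : Fin n // j.1 < i} => (S ω j.1).2.2.2),
          (fun j : {j : Fin n // j.1 < i} => (S ω j.1).2.1),
          K ω))
          (fun ω => (S ω i).2.1) (fun ω => (S ω i).2.2.2)
        + negPartR (condMutualInfoRV μ
            (fun ω => (enc (fun j => (S ω j).1) (K ω),
          (fun j : {j : Fin n // i < j} => (S ω j.1).2.2.1),
          (fun j : {j : Fin n // j.1 < i} => (S ω j.1).2.2.2),
          (fun j : {j : Fin n // j.1 < i} => (S ω j.1).2.1),
          K ω))
            (fun ω => (S ω i).2.2.2)
            (fun ω => (enc (fun j => (S ω j).1) (K ω),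
          (fun j : {j : Fin n // i < j} => (S ω j.1).2.2.1),
          (fun j : {j : Fin n // j.1 < i} => (S ω j.1).2.2.2)))
          - condMutualInfoRV μ
            (fun ω => (enc (fun j => (S ω j).1) (K ω),
          (fun j : {j : Fin n // i < j} => (S ω j.1).2.2.1),
          (fun j : {j : Fin n // j.1 < i} => (S ω j.1).2.2.2),
          (fun j : {j : Fin n // j.1 < i} => (S ω j.1).2.1),
          K ω))
            (fun ω => (S ω i).2.2.1)
            (fun ω => (enc (fun j => (S ω j).1) (K ω),
          (fun j : {j : Fin n // i < j} => (S ω j.1).2.2.1),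
          (fun j : {j : Fin n // j.1 < i} => (S ω j.1).2.2.2))))))
      - entropyRV μ K := by
  classical
  have hT : MSet (fun ω => (S ω, K ω)) := fun s =>
    (hSmeas.prodMk hKmeas) (Set.toFinite s).measurableSet
  have hS : MSet S := hT.comp Prod.fst
  have hp1 : ∑ s : 𝒳t × 𝒳 × 𝒴 × 𝒵, pX s.2.1 * pXt s.2.1 s.1 * pYZ s.2.1 s.2.2 = 1 := by
    rw [Fintype.sum_prod_type_right, Fintype.sum_prod_type]
    simp only
    simp_rw [← Finset.sum_mul, ← Finset.mul_sum, hpXt1, hpYZ1]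
    simpa using hpX1
  have eXZ := iid_map_entropy μ hS hiid hp1 (fun s => (s.2.1, s.2.2.2))
  have eZ := iid_map_entropy μ hS hiid hp1 (fun s => s.2.2.2)
  set W : Ω → 𝒲 := fun ω => enc (fun j => (S ω j).1) (K ω) with hW
  have hm : ∀ {γ : Type} (g : 𝒲 → (Fin n → 𝒳t × 𝒳 × 𝒴 × 𝒵) → 𝒦 → γ),
      MSet (fun ω => g (W ω) (S ω) (K ω)) := fun g =>
    hT.comp (fun t => g (enc (fun j => (t.1 j).1) t.2) t.1 t.2)
  let F : ℕ → ℝ := fun k => entropyRV μ (fun ω => (W ω, K ω, fun j : Fin n =>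
    if j.1 < k then (Sum.inl ((S ω j).2.1, (S ω j).2.2.2) : (𝒳 × 𝒵) ⊕ 𝒴) else Sum.inr (S ω j).2.2.1))
  let G : ℕ → ℝ := fun k => entropyRV μ (fun ω => (W ω, fun j : Fin n =>
    if j.1 < k then (Sum.inl (S ω j).2.2.2 : 𝒵 ⊕ 𝒴) else Sum.inr (S ω j).2.2.1))
  have step : ∀ i : Fin n,
      (condMutualInfoRV μ
          (fun ω => (W ω,
          (fun j : {j : Fin n // i < j} => (S ω j.1).2.2.1),
          (fun j : {j : Fin n // j.1 < i} => (S ω j.1).2.2.2),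
          (fun j : {j : Fin n // j.1 < i} => (S ω j.1).2.1),
          K ω))
          (fun ω => (S ω i).2.1) (fun ω => (S ω i).2.2.2)
        + negPartR (condMutualInfoRV μ
            (fun ω => (W ω,
          (fun j : {j : Fin n // i < j} => (S ω j.1).2.2.1),
          (fun j : {j : Fin n // j.1 < i} => (S ω j.1).2.2.2),
          (fun j : {j : Fin n // j.1 < i} => (S ω j.1).2.1),
          K ω))
            (fun ω => (S ω i).2.2.2)
            (fun ω => (W ω,
          (fun j : {j : Fin n // i < j} => (S ω j.1).2.2.1),
          (fun j : {j : Fin n // j.1 < i} => (S ω j.1).2.2.2)))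
          - condMutualInfoRV μ
            (fun ω => (W ω,
          (fun j : {j : Fin n // i < j} => (S ω j.1).2.2.1),
          (fun j : {j : Fin n // j.1 < i} => (S ω j.1).2.2.2),
          (fun j : {j : Fin n // j.1 < i} => (S ω j.1).2.1),
          K ω))
            (fun ω => (S ω i).2.2.1)
            (fun ω => (W ω,
          (fun j : {j : Fin n // i < j} => (S ω j.1).2.2.1),
          (fun j : {j : Fin n // j.1 < i} => (S ω j.1).2.2.2))))) ≤
        (entropyRV μ (fun ω => ((S ω i).2.1, (S ω i).2.2.2)) - entropyRV μ (fun ω => (S ω i).2.2.2))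
        + (F i.1 - F (i.1 + 1)) + (G (i.1 + 1) - G i.1) := by
    intro i
    refine (add_le_add_right (min_le_left _ _) _).trans (le_of_eq ?_)
    unfold condMutualInfoRV
    have a1 : entropyRV μ (fun ω => ((W ω,
          (fun j : {j : Fin n // i < j} => (S ω j.1).2.2.1),
          (fun j : {j : Fin n // j.1 < i} => (S ω j.1).2.2.2),
          (fun j : {j : Fin n // j.1 < i} => (S ω j.1).2.1),
          K ω), (S ω i).2.2.2)) = entropyRV μ (fun ω => ((W ω,
          (fun j : {j : Fin n // i < j} => (S ω j.1).2.2.1),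
          (fun j : {j : Fin n // j.1 < i} => (S ω j.1).2.2.2),
          (fun j : {j : Fin n // j.1 < i} => (S ω j.1).2.1),
          K ω), (S ω i).2.2.2, (W ω,
          (fun j : {j : Fin n // i < j} => (S ω j.1).2.2.1),
          (fun j : {j : Fin n // j.1 < i} => (S ω j.1).2.2.2)))) := by
      refine entropy_congr μ
        (hm fun w s k => ((w,
          (fun j : {j : Fin n // i < j} => (s j.1).2.2.1),
          (fun j : {j : Fin n // j.1 < i} => (s j.1).2.2.2),
          (fun j : {j : Fin n // j.1 < i} => (s j.1).2.1),
          k), (s i).2.2.2))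
        (hm fun w s k => ((w,
          (fun j : {j : Fin n // i < j} => (s j.1).2.2.1),
          (fun j : {j : Fin n // j.1 < i} => (s j.1).2.2.2),
          (fun j : {j : Fin n // j.1 < i} => (s j.1).2.1),
          k), (s i).2.2.2, (w,
          (fun j : {j : Fin n // i < j} => (s j.1).2.2.1),
          (fun j : {j : Fin n // j.1 < i} => (s j.1).2.2.2)))) ?_
      intro ω ω'
      simp only [Prod.mk.injEq]
      tauto
    have a2 : entropyRV μ (fun ω => ((W ω,
          (fun j : {j : Fin n // i < j} => (S ω j.1).2.2.1),
          (fun j : {j : Fin n // j.1 < i} => (S ω j.1).2.2.2),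
          (fun j : {j : Fin n // j.1 < i} => (S ω j.1).2.1),
          K ω), (S ω i).2.1, (S ω i).2.2.2)) = F (i.1 + 1) := by
      refine entropy_congr μ
        (hm fun w s k => ((w,
          (fun j : {j : Fin n // i < j} => (s j.1).2.2.1),
          (fun j : {j : Fin n // j.1 < i} => (s j.1).2.2.2),
          (fun j : {j : Fin n // j.1 < i} => (s j.1).2.1),
          k), (s i).2.1, (s i).2.2.2))
        (hm fun w s k => (w, k, fun j : Fin n =>
    if j.1 < i.1 + 1 then (Sum.inl ((s j).2.1, (s j).2.2.2) : (𝒳 × 𝒵) ⊕ 𝒴) else Sum.inr (s j).2.2.1)) ?_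
      intro ω ω'
      simp only [Prod.mk.injEq, funext_iff, Subtype.forall]
      constructor
      · rintro ⟨⟨h1, h2, h3, h4, h5⟩, h6, h7⟩
        refine ⟨h1, h5, fun j => ?_⟩
        rcases lt_trichotomy j i with hj | hj | hj
        · rw [if_pos (by omega), if_pos (by omega), h3 j hj, h4 j hj]
        · subst hj
          rw [if_pos (by omega), if_pos (by omega), h6, h7]
        · rw [if_neg (by omega), if_neg (by omega), h2 j hj]
      · rintro ⟨h1, h5, h⟩
        have hlt : ∀ j : Fin n, j ≤ i →
            (S ω j).2.1 = (S ω' j).2.1 ∧ (S ω j).2.2.2 = (S ω' j).2.2.2 := by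
          intro j hj
          have := h j
          rw [if_pos (by omega), if_pos (by omega)] at this
          simpa using this
        refine ⟨⟨h1, fun j hj => ?_, fun j hj => (hlt j hj.le).2, fun j hj => (hlt j hj.le).1, h5⟩,
          (hlt i le_rfl).1, (hlt i le_rfl).2⟩
        have := h j
        rw [if_neg (by omega), if_neg (by omega)] at this
        simpa using this
    have a3 : entropyRV μ (fun ω => ((W ω,
          (fun j : {j : Fin n // i < j} => (S ω j.1).2.2.1),
          (fun j : {j : Fin n // j.1 < i} => (S ω j.1).2.2.2),
          (fun j : {j : Fin n // j.1 < i} => (S ω j.1).2.1),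
          K ω), (S ω i).2.2.1, (W ω,
          (fun j : {j : Fin n // i < j} => (S ω j.1).2.2.1),
          (fun j : {j : Fin n // j.1 < i} => (S ω j.1).2.2.2)))) = F i.1 := by
      refine entropy_congr μ
        (hm fun w s k => ((w,
          (fun j : {j : Fin n // i < j} => (s j.1).2.2.1),
          (fun j : {j : Fin n // j.1 < i} => (s j.1).2.2.2),
          (fun j : {j : Fin n // j.1 < i} => (s j.1).2.1),
          k), (s i).2.2.1, (w,
          (fun j : {j : Fin n // i < j} => (s j.1).2.2.1),
          (fun j : {j : Fin n // j.1 < i} => (s j.1).2.2.2))))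
        (hm fun w s k => (w, k, fun j : Fin n =>
    if j.1 < i.1 then (Sum.inl ((s j).2.1, (s j).2.2.2) : (𝒳 × 𝒵) ⊕ 𝒴) else Sum.inr (s j).2.2.1)) ?_
      intro ω ω'
      simp only [Prod.mk.injEq, funext_iff, Subtype.forall]
      constructor
      · rintro ⟨⟨h1, h2, h3, h4, h5⟩, h6, -⟩
        refine ⟨h1, h5, fun j => ?_⟩
        rcases lt_trichotomy j i with hj | hj | hj
        · rw [if_pos (by omega), if_pos (by omega), h3 j hj, h4 j hj]
        · subst hj
          rw [if_neg (by omega), if_neg (by omega), h6]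
        · rw [if_neg (by omega), if_neg (by omega), h2 j hj]
      · rintro ⟨h1, h5, h⟩
        have hlt : ∀ j : Fin n, j < i →
            (S ω j).2.1 = (S ω' j).2.1 ∧ (S ω j).2.2.2 = (S ω' j).2.2.2 := by
          intro j hj
          have := h j
          rw [if_pos (by omega), if_pos (by omega)] at this
          simpa using this
        have hge : ∀ j : Fin n, i ≤ j → (S ω j).2.2.1 = (S ω' j).2.2.1 := by
          intro j hj
          have := h j
          rw [if_neg (by omega), if_neg (by omega)] at this
          simpa using this
        exact ⟨⟨h1, fun j hj => hge j hj.le, fun j hj => (hlt j hj).2, fun j hj => (hlt j hj).1, h5⟩,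
          hge i le_rfl, h1, fun j hj => hge j hj.le, fun j hj => (hlt j hj).2⟩
    have a4 : entropyRV μ (fun ω => ((S ω i).2.2.2, (W ω,
          (fun j : {j : Fin n // i < j} => (S ω j.1).2.2.1),
          (fun j : {j : Fin n // j.1 < i} => (S ω j.1).2.2.2)))) = G (i.1 + 1) := by
      refine entropy_congr μ
        (hm fun w s k => ((s i).2.2.2, (w,
          (fun j : {j : Fin n // i < j} => (s j.1).2.2.1),
          (fun j : {j : Fin n // j.1 < i} => (s j.1).2.2.2))))
        (hm fun w s k => (w, fun j : Fin n =>
    if j.1 < i.1 + 1 then (Sum.inl (s j).2.2.2 : 𝒵 ⊕ 𝒴) else Sum.inr (s j).2.2.1)) ?_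
      intro ω ω'
      simp only [Prod.mk.injEq, funext_iff, Subtype.forall]
      constructor
      · rintro ⟨h7, h1, h2, h3⟩
        refine ⟨h1, fun j => ?_⟩
        rcases lt_trichotomy j i with hj | hj | hj
        · rw [if_pos (by omega), if_pos (by omega), h3 j hj]
        · subst hj
          rw [if_pos (by omega), if_pos (by omega), h7]
        · rw [if_neg (by omega), if_neg (by omega), h2 j hj]
      · rintro ⟨h1, h⟩
        have hlt : ∀ j : Fin n, j ≤ i → (S ω j).2.2.2 = (S ω' j).2.2.2 := by
          intro j hj
          have := h j
          rw [if_pos (by omega), if_pos (by omega)] at this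
          simpa using this
        refine ⟨hlt i le_rfl, h1, fun j hj => ?_, fun j hj => hlt j hj.le⟩
        have := h j
        rw [if_neg (by omega), if_neg (by omega)] at this
        simpa using this
    have a5 : entropyRV μ (fun ω => ((S ω i).2.2.1, (W ω,
          (fun j : {j : Fin n // i < j} => (S ω j.1).2.2.1),
          (fun j : {j : Fin n // j.1 < i} => (S ω j.1).2.2.2)))) = G i.1 := by
      refine entropy_congr μ
        (hm fun w s k => ((s i).2.2.1, (w,
          (fun j : {j : Fin n // i < j} => (s j.1).2.2.1),
          (fun j : {j : Fin n // j.1 < i} => (s j.1).2.2.2))))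
        (hm fun w s k => (w, fun j : Fin n =>
    if j.1 < i.1 then (Sum.inl (s j).2.2.2 : 𝒵 ⊕ 𝒴) else Sum.inr (s j).2.2.1)) ?_
      intro ω ω'
      simp only [Prod.mk.injEq, funext_iff, Subtype.forall]
      constructor
      · rintro ⟨h7, h1, h2, h3⟩
        refine ⟨h1, fun j => ?_⟩
        rcases lt_trichotomy j i with hj | hj | hj
        · rw [if_pos (by omega), if_pos (by omega), h3 j hj]
        · subst hj
          rw [if_neg (by omega), if_neg (by omega), h7]
        · rw [if_neg (by omega), if_neg (by omega), h2 j hj]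
      · rintro ⟨h1, h⟩
        have hge : ∀ j : Fin n, i ≤ j → (S ω j).2.2.1 = (S ω' j).2.2.1 := by
          intro j hj
          have := h j
          rw [if_neg (by omega), if_neg (by omega)] at this
          simpa using this
        refine ⟨hge i le_rfl, h1, fun j hj => hge j hj.le, fun j hj => ?_⟩
        have := h j
        rw [if_pos (by omega), if_pos (by omega)] at this
        simpa using this
    rw [a1, a2, a3, a4, a5]
    ring
  have hsum := (Finset.sum_le_sum (s := Finset.univ) fun i _ => step i).trans_eq (by
    rw [Finset.sum_add_distrib, Finset.sum_add_distrib, Finset.sum_sub_distrib, ← eXZ, ← eZ,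
      Fin.sum_univ_eq_sum_range (fun k => F k - F (k + 1)),
      Fin.sum_univ_eq_sum_range (fun k => G (k + 1) - G k),
      Finset.sum_range_sub, Finset.sum_range_sub'])
  have b1 : F 0 ≤ G 0 + entropyRV μ K := by
    have e : G 0 = entropyRV μ (fun ω => (W ω, fun j : Fin n => (S ω j).2.2.1)) := by
      refine entropy_congr μ
        (hm fun w s k => (w, fun j : Fin n =>
          if j.1 < 0 then (Sum.inl (s j).2.2.2 : 𝒵 ⊕ 𝒴) else Sum.inr (s j).2.2.1))
        (hm fun w s k => (w, fun j : Fin n => (s j).2.2.1)) ?_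
      intro ω ω'
      simp [funext_iff]
    rw [e]
    refine le_trans ?_ (entropy_pair_le μ
      (hm fun w s k => ((w, fun j : Fin n => (s j).2.2.1), k)))
    refine entropy_le_of μ (hm fun w s k => ((w, fun j : Fin n => (s j).2.2.1), k)) _ ?_
    intro ω ω'
    simp [funext_iff]
    tauto
  have b2 : entropyRV μ (fun ω => ((fun j => (S ω j).2.1), W ω, fun j => (S ω j).2.2.2)) ≤ F n := by
    refine entropy_le_of μ
        (hm fun w s k => (w, k, fun j : Fin n =>
    if j.1 < n then (Sum.inl ((s j).2.1, (s j).2.2.2) : (𝒳 × 𝒵) ⊕ 𝒴) else Sum.inr (s j).2.2.1)) _ ?_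
    intro ω ω'
    simp [funext_iff]
    intro h1 h2 h
    exact ⟨fun j => (h j).1, h1, fun j => (h j).2⟩
  have b3 : entropyRV μ (fun ω => (W ω, fun j => (S ω j).2.2.2)) = G n := by
    refine entropy_congr μ (hm fun w s k => (w, fun j => (s j).2.2.2))
        (hm fun w s k => (w, fun j : Fin n =>
          if j.1 < n then (Sum.inl (s j).2.2.2 : 𝒵 ⊕ 𝒴) else Sum.inr (s j).2.2.1)) ?_
    intro ω ω'
    simp [funext_iff]
  have b4 : entropyRV μ (fun ω => ((fun j => (S ω j).2.1), fun j => (S ω j).2.2.2))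
      = entropyRV μ (fun ω j => ((S ω j).2.1, (S ω j).2.2.2)) := by
    refine entropy_congr μ (hm fun w s k => ((fun j => (s j).2.1), fun j => (s j).2.2.2))
        (hm fun w s k => fun j => ((s j).2.1, (s j).2.2.2)) ?_
    intro ω ω'
    simp only [Prod.mk.injEq, funext_iff]
    exact forall_and.symm
  have hL : condMutualInfoRV μ (fun ω => fun j => (S ω j).2.1) W (fun ω => fun j => (S ω j).2.2.2)
      = entropyRV μ (fun ω => ((fun j => (S ω j).2.1), fun j => (S ω j).2.2.2))
        + entropyRV μ (fun ω => (W ω, fun j => (S ω j).2.2.2))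
        - entropyRV μ (fun ω j => (S ω j).2.2.2)
        - entropyRV μ (fun ω => ((fun j => (S ω j).2.1), W ω, fun j => (S ω j).2.2.2)) := rfl
  rw [hL, b3, b4, ge_iff_le]
  refine (sub_le_sub_right hsum _).trans ?_
  linarith
end
end

section
/- Secrecy-leakage converse bound (small key regime): under the converse setup, I(X̃^n; W | Z^n) ≥ Σ_{i=1}^n ( I(U_i; X̃_i | Z_i) + [I(U_i; Z_i | V_i) − I(U_i; Y_i | V_i)]^- ) − H(K). -/
open MeasureTheory

noncomputable section

namespace SLC

variable {E : Type*} [Fintype E]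

open Classical in
/-- mass -/
def mass (q : E → ℝ) {α : Type*} (F : E → α) (x : α) : ℝ := ∑ t, if F t = x then q t else 0

/-- entropy -/
def ent (q : E → ℝ) {α : Type*} [Fintype α] (F : E → α) : ℝ :=
  ∑ x, Real.negMulLog (mass q F x)

/-- determined -/
def Det {α β : Type*} (F : E → α) (G : E → β) : Prop := ∀ t t', G t = G t' → F t = F t'


theorem sum_mass (q : E → ℝ) {α : Type*} [Fintype α] (F : E → α) (g : α → ℝ) :
    ∑ x, mass q F x * g x = ∑ t, q t * g (F t) := by
  classical
  simp only [mass, Finset.sum_mul]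
  rw [Finset.sum_comm]
  refine Finset.sum_congr rfl fun t _ => ?_
  simp [ite_mul]

theorem ent_eq (q : E → ℝ) {α : Type*} [Fintype α] (F : E → α) :
    ent q F = ∑ t, q t * -Real.log (mass q F (F t)) := by
  rw [← sum_mass q F (fun x => -Real.log (mass q F x))]
  simp [ent, Real.negMulLog]

theorem mass_nonneg {q : E → ℝ} (hq : ∀ t, 0 ≤ q t) {α : Type*} (F : E → α) (x : α) :
    0 ≤ mass q F x := by
  unfold mass
  refine Finset.sum_nonneg fun t _ => ?_
  split_ifs
  · exact hq t
  · exact le_rfl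

theorem le_mass {q : E → ℝ} (hq : ∀ t, 0 ≤ q t) {α : Type*} (F : E → α) (t : E) :
    q t ≤ mass q F (F t) := by
  classical
  unfold mass
  have := Finset.single_le_sum (f := fun t' => if F t' = F t then q t' else 0) (s := Finset.univ)
    (fun t' _ => by split_ifs; exacts [hq _, le_rfl]) (Finset.mem_univ t)
  simpa using this

theorem ent_le {q : E → ℝ} (hq : ∀ t, 0 ≤ q t) {α β : Type*} [Fintype α] [Fintype β]
    {F : E → α} {G : E → β} (h : Det F G) : ent q F ≤ ent q G := by
  rw [ent_eq, ent_eq]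
  refine Finset.sum_le_sum fun t _ => ?_
  rcases (hq t).eq_or_lt with h0 | h0
  · simp [← h0]
  · refine mul_le_mul_of_nonneg_left (neg_le_neg ?_) h0.le
    refine Real.log_le_log (h0.trans_le (le_mass hq G t)) ?_
    unfold mass
    refine Finset.sum_le_sum fun t' _ => ?_
    by_cases h1 : G t' = G t
    · simp [h1, h _ _ h1]
    · rw [if_neg h1]; split_ifs
      · exact hq _
      · exact le_rfl

theorem ent_congr {q : E → ℝ} (hq : ∀ t, 0 ≤ q t) {α β : Type*} [Fintype α] [Fintype β]
    {F : E → α} {G : E → β} (h : Det F G) (h' : Det G F) : ent q F = ent q G :=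
  le_antisymm (ent_le hq h) (ent_le hq h')

theorem marg (q : E → ℝ) {α γ : Type*} [Fintype α] (X : E → α) (Z : E → γ) (z : γ) :
    ∑ x, mass q (fun t => (X t, Z t)) (x, z) = mass q Z z := by
  classical
  simp only [mass]
  rw [Finset.sum_comm]
  refine Finset.sum_congr rfl fun t _ => ?_
  by_cases h : Z t = z <;> simp [h]

theorem submod0 {q : E → ℝ} (hq : ∀ t, 0 ≤ q t)
    {α β γ : Type*} [Fintype α] [Fintype β] [Fintype γ] (X : E → α) (Y : E → β) (Z : E → γ) :
    ent q Z + ent q (fun t => (X t, Y t, Z t))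
      ≤ ent q (fun t => (X t, Z t)) + ent q (fun t => (Y t, Z t)) := by
  set mz := mass q Z with hmz
  set mx := mass q (fun t => (X t, Z t)) with hmx
  set my := mass q (fun t => (Y t, Z t)) with hmy
  set m := mass q (fun t => (X t, Y t, Z t)) with hm
  have hz0 : ∀ z, 0 ≤ mz z := mass_nonneg hq Z
  have hx0 : ∀ z, 0 ≤ mx z := mass_nonneg hq _
  have hy0 : ∀ z, 0 ≤ my z := mass_nonneg hq _
  have hm0 : ∀ z, 0 ≤ m z := mass_nonneg hq _
  have key : ∑ t, q t * (mx (X t, Z t) * my (Y t, Z t) / (mz (Z t) * m (X t, Y t, Z t)))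
      ≤ ∑ t, q t := by
    have e1 := sum_mass q (fun t => (X t, Y t, Z t))
      (fun a => mx (a.1, a.2.2) * my (a.2.1, a.2.2) / (mz a.2.2 * m a))
    have e2 := sum_mass q Z (fun _ => 1)
    simp only [mul_one] at e2
    rw [← e2, ← e1, ← hm, ← hmz]
    calc _ ≤ ∑ a : α × β × γ, mx (a.1, a.2.2) * my (a.2.1, a.2.2) / mz a.2.2 := by
          refine Finset.sum_le_sum fun a _ => ?_
          rcases (hm0 a).eq_or_lt with h | h
          · rw [← h]
            simp only [zero_mul]
            exact div_nonneg (mul_nonneg (hx0 _) (hy0 _)) (hz0 _)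
          · rw [mul_comm (mz a.2.2), ← div_div, mul_div_assoc', mul_div_assoc',
              mul_div_cancel_left₀ _ h.ne']
      _ = ∑ z, ∑ x, ∑ y, mx (x, z) * my (y, z) / mz z := by
          simp only [Fintype.sum_prod_type]
          conv_rhs => rw [Finset.sum_comm]
          refine Finset.sum_congr rfl fun x _ => ?_
          rw [Finset.sum_comm]
      _ ≤ ∑ z, mz z := by
          refine Finset.sum_le_sum fun z _ => ?_
          have : ∑ x, ∑ y, mx (x, z) * my (y, z) / mz z
              = (∑ x, mx (x, z)) * (∑ y, my (y, z)) / mz z := by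
            rw [Finset.sum_mul_sum, Finset.sum_div]
            refine Finset.sum_congr rfl fun x _ => ?_
            rw [Finset.sum_div]
          rw [this, hmx, hmy, marg, marg, ← hmz]
          rcases (hz0 z).eq_or_lt with h | h
          · simp [← h]
          · rw [mul_div_cancel_left₀ _ h.ne']
  rw [ent_eq, ent_eq, ent_eq, ent_eq, ← sub_nonneg, ← Finset.sum_add_distrib,
    ← Finset.sum_add_distrib, ← Finset.sum_sub_distrib]
  rw [← sub_nonneg, ← Finset.sum_sub_distrib] at key
  refine key.trans (Finset.sum_le_sum fun t _ => ?_)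
  rcases (hq t).eq_or_lt with h0 | h0
  · simp [← h0]
  have a1 : 0 < mz (Z t) := h0.trans_le (le_mass hq Z t)
  have a2 : 0 < mx (X t, Z t) := h0.trans_le (le_mass hq (fun t => (X t, Z t)) t)
  have a3 : 0 < my (Y t, Z t) := h0.trans_le (le_mass hq (fun t => (Y t, Z t)) t)
  have a4 : 0 < m (X t, Y t, Z t) := h0.trans_le (le_mass hq (fun t => (X t, Y t, Z t)) t)
  have := Real.log_le_sub_one_of_pos (div_pos (mul_pos a2 a3) (mul_pos a1 a4))
  rw [Real.log_div (mul_pos a2 a3).ne' (mul_pos a1 a4).ne', Real.log_mul a2.ne' a3.ne',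
    Real.log_mul a1.ne' a4.ne'] at this
  have := mul_le_mul_of_nonneg_left this h0.le
  simp only [← hmz, ← hmx, ← hmy, ← hm]
  linarith

theorem submod {q : E → ℝ} (hq : ∀ t, 0 ≤ q t)
    {α β γ δ : Type*} [Fintype α] [Fintype β] [Fintype γ] [Fintype δ]
    {A : E → α} {B : E → β} {C : E → γ} {D : E → δ}
    (hA : Det C A) (hB : Det C B) (hD : Det D (fun t => (A t, B t))) :
    ent q C + ent q D ≤ ent q A + ent q B := by
  have h := submod0 hq A B C
  have h1 : ent q (fun t => (A t, C t)) ≤ ent q A :=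
    ent_le hq fun t t' h => by simp [h, hA _ _ h]
  have h2 : ent q (fun t => (B t, C t)) ≤ ent q B :=
    ent_le hq fun t t' h => by simp [h, hB _ _ h]
  have h3 : ent q D ≤ ent q (fun t => (A t, B t, C t)) :=
    ent_le hq fun t t' h => by
      simp only [Prod.mk.injEq] at h
      exact hD _ _ (by simp [h])
  linarith

theorem ent_const {q : E → ℝ} (hq1 : ∑ t, q t = 1) {α : Type*} [Fintype α]
    (F : E → α) (h : ∀ t t', F t = F t') : ent q F = 0 := by
  rw [ent_eq]
  refine Finset.sum_eq_zero fun t _ => ?_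
  have : mass q F (F t) = 1 := by
    simp [mass, h _ t, hq1]
  simp [this]

theorem subadd {q : E → ℝ} (hq : ∀ t, 0 ≤ q t) (hq1 : ∑ t, q t = 1)
    {α β δ : Type*} [Fintype α] [Fintype β] [Fintype δ]
    {A : E → α} {B : E → β} {D : E → δ}
    (hD : Det D (fun t => (A t, B t))) :
    ent q D ≤ ent q A + ent q B := by
  have h := submod hq (A := A) (B := B) (C := fun _ => ()) (D := D)
    (fun _ _ _ => rfl) (fun _ _ _ => rfl) hD
  rw [ent_const hq1 (fun _ : E => ()) (fun _ _ => rfl)] at h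
  linarith

/-- independence in entropic form -/
theorem indep_sub {q : E → ℝ} (hq : ∀ t, 0 ≤ q t)
    {α β γ δ ε : Type*} [Fintype α] [Fintype β] [Fintype γ] [Fintype δ] [Fintype ε]
    {A : E → α} {B : E → β} {F : E → γ} {G : E → δ} {J : E → ε}
    (hi : ent q A + ent q B ≤ ent q (fun t => (A t, B t)))
    (hF : Det F A) (hG : Det G B) (hJF : Det F J) (hJG : Det G J) :
    ent q F + ent q G ≤ ent q J := by
  have h1 := submod hq (A := A) (B := fun t => (F t, B t)) (C := F) (D := fun t => (A t, B t))
    hF (fun t t' h => by simp at h; exact h.1) (fun t t' h => by simp at h; simp [h])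
  have h2 := submod hq (A := B) (B := fun t => (F t, G t)) (C := G) (D := fun t => (F t, B t))
    hG (fun t t' h => by simp at h; exact h.2) (fun t t' h => by simp at h; simp [h])
  have h3 : ent q (fun t => (F t, G t)) ≤ ent q J :=
    ent_le hq fun t t' h => by simp [hJF _ _ h, hJG _ _ h]
  linarith

theorem indep_cond {q : E → ℝ} (hq : ∀ t, 0 ≤ q t) (hq1 : ∑ t, q t = 1)
    {α β γ δ ε ζ η : Type*} [Fintype α] [Fintype β] [Fintype γ] [Fintype δ] [Fintype ε]
    [Fintype ζ] [Fintype η]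
    {A : E → α} {B : E → β} (f : E → γ) {g : E → δ} {C : E → ε} {fg : E → ζ} {fC : E → η}
    (hi : ent q A + ent q B ≤ ent q (fun t => (A t, B t)))
    (hfgA : Det fg A) (hC : Det C (fun t => (g t, B t)))
    (hffg : Det fg (fun t => (f t, g t)))
    (hCf : Det C fC) (hff : Det f fC) :
    ent q fg + ent q C ≤ ent q g + ent q fC := by
  have h1 : ent q fg + ent q B ≤ ent q (fun t => (fg t, B t)) :=
    indep_sub hq hi hfgA (fun t t' h => h) (fun t t' h => by simp at h; exact h.1)
      (fun t t' h => by simp at h; exact h.2)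
  have h2 : ent q (fun t => (g t, B t)) ≤ ent q g + ent q B := subadd hq hq1 (fun t t' h => h)
  have h3 := submod hq (A := fun t => (g t, B t)) (B := fC) (C := C)
    (D := fun t => (fg t, B t)) hC hCf (fun t t' h => by
      simp only [Prod.mk.injEq] at h ⊢
      exact ⟨hffg _ _ (by simp [h, hff _ _ h.2]), h.1.2⟩)
  linarith

theorem prod_indep {q : E → ℝ} {α β : Type*} [Fintype α] [Fintype β]
    (e : E ≃ α × β) (a : α → ℝ) (b : β → ℝ) (hq : ∀ t, q t = a (e t).1 * b (e t).2)
    (ha : ∑ x, a x = 1) (hb : ∑ y, b y = 1) :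
    ent q (fun t => (e t).1) + ent q (fun t => (e t).2) ≤
      ent q (fun t => ((e t).1, (e t).2)) := by
  classical
  have m1 : ∀ x, mass q (fun t => (e t).1) x = a x := by
    intro x
    unfold mass
    rw [← e.symm.sum_comp]
    simp only [hq, Equiv.apply_symm_apply, Fintype.sum_prod_type]
    rw [Finset.sum_comm]
    simp [← Finset.mul_sum, hb]
  have m2 : ∀ x, mass q (fun t => (e t).2) x = b x := by
    intro x
    unfold mass
    rw [← e.symm.sum_comp]
    simp only [hq, Equiv.apply_symm_apply, Fintype.sum_prod_type]
    simp [← Finset.sum_mul, ha]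
  have m3 : ∀ x, mass q (fun t => ((e t).1, (e t).2)) x = a x.1 * b x.2 := by
    intro x
    unfold mass
    rw [← e.symm.sum_comp]
    simp only [hq, Equiv.apply_symm_apply]
    simp
  rw [ent_eq, ent_eq, ent_eq, ← Finset.sum_add_distrib]
  refine le_of_eq (Finset.sum_congr rfl fun t _ => ?_)
  rw [m1, m2, m3]
  by_cases h1 : a (e t).1 = 0
  · simp [hq, h1]
  by_cases h2 : b (e t).2 = 0
  · simp [hq, h2]
  rw [Real.log_mul h1 h2]; ring

theorem block_indep {κ σ : Type*} [Fintype κ] [Fintype σ] {n : ℕ} (p : σ → ℝ) (r : κ → ℝ)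
    (hp : ∑ s, p s = 1) (hr : ∑ k, r k = 1) {q : κ × (Fin n → σ) → ℝ}
    (hq : ∀ t, q t = r t.1 * ∏ i, p (t.2 i)) (P : Fin n → Prop) [DecidablePred P] :
    ent q (fun t => fun j : {j // P j} => t.2 j.1)
      + ent q (fun t => (t.1, fun j : {j // ¬ P j} => t.2 j.1)) ≤
    ent q (fun t => ((fun j : {j // P j} => t.2 j.1), (t.1, fun j : {j // ¬ P j} => t.2 j.1))) := by
  classical
  let e0 := Equiv.piEquivPiSubtypeProd P (fun _ : Fin n => σ)
  let e : κ × (Fin n → σ) ≃ ({j // P j} → σ) × (κ × ({j // ¬ P j} → σ)) :=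
    { toFun := fun t => ((e0 t.2).1, (t.1, (e0 t.2).2))
      invFun := fun u => (u.2.1, e0.symm (u.1, u.2.2))
      left_inv := fun t => by simp
      right_inv := fun u => by simp }
  have hS : ∀ (ι : Type) [Fintype ι] [DecidableEq ι], ∑ v : ι → σ, ∏ i, p (v i) = 1 := by
    intro ι _ _
    rw [← Fintype.prod_sum (fun (_ : ι) s => p s)]
    simp [hp]
  refine prod_indep e (fun v => ∏ j, p (v j)) (fun u => r u.1 * ∏ j, p (u.2 j)) ?_ (hS _) ?_
  · intro t
    rw [hq, ← Fintype.prod_subtype_mul_prod_subtype P (fun i => p (t.2 i))]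
    simp only [e, e0, Equiv.coe_fn_mk, Equiv.piEquivPiSubtypeProd_apply]
    ring
  · rw [Fintype.sum_prod_type]
    simp [← Finset.mul_sum, hS, hr]

section core

variable {𝒳 𝒳t 𝒴 𝒵 𝒲 𝒦 : Type}
    [Fintype 𝒳] [Fintype 𝒳t] [Fintype 𝒴] [Fintype 𝒵] [Fintype 𝒲] [Fintype 𝒦] {n : ℕ}

/-- prefix -/
abbrev pre {β : Type} (f : 𝒳t × 𝒳 × 𝒴 × 𝒵 → β) (k : ℕ)
    (t : 𝒦 × (Fin n → 𝒳t × 𝒳 × 𝒴 × 𝒵)) : {j : Fin n // j.1 < k} → β := fun j => f (t.2 j.1)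

/-- suffix -/
abbrev suf {β : Type} (f : 𝒳t × 𝒳 × 𝒴 × 𝒵 → β) (k : ℕ)
    (t : 𝒦 × (Fin n → 𝒳t × 𝒳 × 𝒴 × 𝒵)) : {j : Fin n // k ≤ j.1} → β := fun j => f (t.2 j.1)

/-- potential -/
def Phi (q : 𝒦 × (Fin n → 𝒳t × 𝒳 × 𝒴 × 𝒵) → ℝ)
    (W : 𝒦 × (Fin n → 𝒳t × 𝒳 × 𝒴 × 𝒵) → 𝒲) (k : ℕ) : ℝ :=
  ent q (fun t => (W t, suf (fun s => s.2.2.1) k t, pre (fun s => s.2.2.2) k t))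
  - ent q (fun t => (pre (fun s => s.1) k t, W t, t.1, suf (fun s => s.2.2.1) k t))
  + ent q (fun t => pre (fun s => s.1) k t) - ent q (fun t => pre (fun s => s.2.2.2) k t)

/-- V -/
abbrev VV (W : 𝒦 × (Fin n → 𝒳t × 𝒳 × 𝒴 × 𝒵) → 𝒲) (i : Fin n)
    (t : 𝒦 × (Fin n → 𝒳t × 𝒳 × 𝒴 × 𝒵)) :=
  (W t, (fun j : {j : Fin n // i < j} => (t.2 j.1).2.2.1),
          (fun j : {j : Fin n // j.1 < i} => (t.2 j.1).2.2.2))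

/-- U -/
abbrev UU (W : 𝒦 × (Fin n → 𝒳t × 𝒳 × 𝒴 × 𝒵) → 𝒲) (i : Fin n)
    (t : 𝒦 × (Fin n → 𝒳t × 𝒳 × 𝒴 × 𝒵)) :=
  (W t, (fun j : {j : Fin n // i < j} => (t.2 j.1).2.2.1),
          (fun j : {j : Fin n // j.1 < i} => (t.2 j.1).2.2.2),
          (fun j : {j : Fin n // j.1 < i} => (t.2 j.1).2.1), t.1)

/-- conditional mutual information -/
def cmi {E : Type*} [Fintype E] (q : E → ℝ) {α β γ : Type*} [Fintype α] [Fintype β] [Fintype γ]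
    (X : E → α) (Y : E → β) (Z : E → γ) : ℝ :=
  ent q (fun t => (X t, Z t)) + ent q (fun t => (Y t, Z t)) - ent q Z
    - ent q (fun t => (X t, Y t, Z t))

theorem step {q : 𝒦 × (Fin n → 𝒳t × 𝒳 × 𝒴 × 𝒵) → ℝ}
    (W : 𝒦 × (Fin n → 𝒳t × 𝒳 × 𝒴 × 𝒵) → 𝒲) (p : 𝒳t × 𝒳 × 𝒴 × 𝒵 → ℝ) (r : 𝒦 → ℝ)
    (hp : ∑ s, p s = 1) (hr : ∑ k, r k = 1)
    (hq : ∀ t, q t = r t.1 * ∏ i, p (t.2 i)) (hq0 : ∀ t, 0 ≤ q t) (hq1 : ∑ t, q t = 1)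
    (hW : ∀ t t', t.1 = t'.1 → (∀ j, (t.2 j).1 = (t'.2 j).1) → W t = W t') (i : Fin n) :
    cmi q (UU W i) (fun t => (t.2 i).1) (fun t => (t.2 i).2.2.2)
      + (cmi q (UU W i) (fun t => (t.2 i).2.2.2) (VV W i)
        - cmi q (UU W i) (fun t => (t.2 i).2.2.1) (VV W i))
      ≤ Phi q W (i.1 + 1) - Phi q W i.1 := by
  have I1 := block_indep p r hp hr hq (fun j => j.1 = i.1)
  have I2 := block_indep p r hp hr hq (fun j => j.1 < i.1)
  -- F terms
  have F1 : ent q (fun t => ((t.2 i).2.2.2, VV W i t)) =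
      ent q (fun t => (W t, suf (fun s => s.2.2.1) (i.1+1) t, pre (fun s => s.2.2.2) (i.1+1) t)) := by
    apply ent_congr hq0 <;> (intro t t' h; simp only [Prod.mk.injEq, funext_iff, Subtype.forall] at h ⊢; grind)
  have F0 : ent q (fun t => ((t.2 i).2.2.1, VV W i t)) =
      ent q (fun t => (W t, suf (fun s => s.2.2.1) i.1 t, pre (fun s => s.2.2.2) i.1 t)) := by
    apply ent_congr hq0 <;> (intro t t' h; simp only [Prod.mk.injEq, funext_iff, Subtype.forall] at h ⊢; grind)
  have E1 : ent q (fun t => (UU W i t, (t.2 i).2.2.2, VV W i t)) =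
      ent q (fun t => (UU W i t, (t.2 i).2.2.2)) := by
    apply ent_congr hq0 <;> (intro t t' h; simp only [Prod.mk.injEq, funext_iff, Subtype.forall] at h ⊢; grind)
  have E2 : ent q (fun t => (UU W i t, (t.2 i).2.2.1, VV W i t)) =
      ent q (fun t => (UU W i t, (t.2 i).2.2.1)) := by
    apply ent_congr hq0 <;> (intro t t' h; simp only [Prod.mk.injEq, funext_iff, Subtype.forall] at h ⊢; grind)
  have Z1 : ent q (fun t => ((t.2 i).1, (t.2 i).2.2.2)) + ent q (fun t => (UU W i t, (t.2 i).1))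
      ≤ ent q (fun t => (t.2 i).1) + ent q (fun t => (UU W i t, (t.2 i).1, (t.2 i).2.2.2)) := by
    apply indep_cond hq0 hq1 (fun t => (t.2 i).2.2.2) I1 <;> (intro t t' h; simp only [Prod.mk.injEq, funext_iff, Subtype.forall] at h ⊢; grind)
  have Y1 : ent q (fun t => ((t.2 i).1, (t.2 i).2.2.1)) +
        ent q (fun t => (pre (fun s => s.1) (i.1+1) t, W t, t.1, suf (fun s => s.2.2.1) (i.1+1) t))
      ≤ ent q (fun t => (t.2 i).1) +
        ent q (fun t => (pre (fun s => s.1) (i.1+1) t, W t, t.1, suf (fun s => s.2.2.1) i.1 t)) := by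
    apply indep_cond hq0 hq1 (fun t => (t.2 i).2.2.1) I1 <;> (intro t t' h; simp only [Prod.mk.injEq, funext_iff, Subtype.forall] at h ⊢; grind)
  have M1 : ent q (fun t => (pre (fun s => s.1) i.1 t, pre (fun s => s.2.1) i.1 t,
          pre (fun s => s.2.2.2) i.1 t)) +
        ent q (fun t => (pre (fun s => s.1) (i.1+1) t, W t, t.1, suf (fun s => s.2.2.1) i.1 t))
      ≤ ent q (fun t => pre (fun s => s.1) i.1 t) +
        ent q (fun t => ((t.2 i).1, (t.2 i).2.2.1, UU W i t, pre (fun s => s.1) i.1 t)) := by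
    apply indep_cond hq0 hq1 (fun t => (pre (fun s => s.2.1) i.1 t,
          pre (fun s => s.2.2.2) i.1 t)) I2 <;> (intro t t' h; simp only [Prod.mk.injEq, funext_iff, Subtype.forall] at h ⊢; grind)
  have M2 : ent q (fun t => pre (fun s => s.1) i.1 t) +
        ent q (fun t => ((t.2 i).2.2.1, UU W i t, pre (fun s => s.1) i.1 t))
      ≤ ent q (fun t => (pre (fun s => s.1) i.1 t, pre (fun s => s.2.1) i.1 t,
          pre (fun s => s.2.2.2) i.1 t)) +
        ent q (fun t => (pre (fun s => s.1) i.1 t, W t, t.1, suf (fun s => s.2.2.1) i.1 t)) := by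
    apply submod hq0 <;> (intro t t' h; simp only [Prod.mk.injEq, funext_iff, Subtype.forall] at h ⊢; grind)
  have M3 : ent q (fun t => (UU W i t, (t.2 i).2.2.1)) +
        ent q (fun t => ((t.2 i).1, (t.2 i).2.2.1, UU W i t, pre (fun s => s.1) i.1 t))
      ≤ ent q (fun t => ((t.2 i).1, (t.2 i).2.2.1, UU W i t)) +
        ent q (fun t => ((t.2 i).2.2.1, UU W i t, pre (fun s => s.1) i.1 t)) := by
    apply submod hq0 <;> (intro t t' h; simp only [Prod.mk.injEq, funext_iff, Subtype.forall] at h ⊢; grind)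
  have M4 : ent q (fun t => (t.2 i).1) + ent q (fun t => ((t.2 i).1, (t.2 i).2.2.1, UU W i t))
      ≤ ent q (fun t => ((t.2 i).1, (t.2 i).2.2.1)) + ent q (fun t => (UU W i t, (t.2 i).1)) := by
    apply submod hq0 <;> (intro t t' h; simp only [Prod.mk.injEq, funext_iff, Subtype.forall] at h ⊢; grind)
  have X1 : ent q (fun t => pre (fun s => s.1) i.1 t) + ent q (fun t => (t.2 i).1) ≤
      ent q (fun t => pre (fun s => s.1) (i.1+1) t) := by
    apply indep_sub hq0 I2 <;> (intro t t' h; simp only [Prod.mk.injEq, funext_iff, Subtype.forall] at h ⊢; grind)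
  have Z2 : ent q (fun t => pre (fun s => s.2.2.2) (i.1+1) t) ≤
      ent q (fun t => pre (fun s => s.2.2.2) i.1 t) + ent q (fun t => (t.2 i).2.2.2) := by
    apply subadd hq0 hq1 <;> (intro t t' h; simp only [Prod.mk.injEq, funext_iff, Subtype.forall] at h ⊢; grind)
  unfold cmi Phi
  linarith

theorem core {q : 𝒦 × (Fin n → 𝒳t × 𝒳 × 𝒴 × 𝒵) → ℝ}
    (W : 𝒦 × (Fin n → 𝒳t × 𝒳 × 𝒴 × 𝒵) → 𝒲) (p : 𝒳t × 𝒳 × 𝒴 × 𝒵 → ℝ) (r : 𝒦 → ℝ)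
    (hp : ∑ s, p s = 1) (hr : ∑ k, r k = 1)
    (hq : ∀ t, q t = r t.1 * ∏ i, p (t.2 i)) (hq0 : ∀ t, 0 ≤ q t) (hq1 : ∑ t, q t = 1)
    (hW : ∀ t t', t.1 = t'.1 → (∀ j, (t.2 j).1 = (t'.2 j).1) → W t = W t') :
    (∑ i : Fin n, (cmi q (UU W i) (fun t => (t.2 i).1) (fun t => (t.2 i).2.2.2)
      + negPartR (cmi q (UU W i) (fun t => (t.2 i).2.2.2) (VV W i)
        - cmi q (UU W i) (fun t => (t.2 i).2.2.1) (VV W i)))) - ent q (fun t => t.1)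
      ≤ cmi q (fun t j => (t.2 j).1) W (fun t j => (t.2 j).2.2.2) := by
  have hsum : (∑ i : Fin n, (cmi q (UU W i) (fun t => (t.2 i).1) (fun t => (t.2 i).2.2.2)
      + negPartR (cmi q (UU W i) (fun t => (t.2 i).2.2.2) (VV W i)
        - cmi q (UU W i) (fun t => (t.2 i).2.2.1) (VV W i)))) ≤ Phi q W n - Phi q W 0 := by
    rw [← Finset.sum_range_sub, ← Fin.sum_univ_eq_sum_range (fun k => Phi q W (k+1) - Phi q W k)]
    refine Finset.sum_le_sum fun i _ => ?_
    refine le_trans ?_ (step W p r hp hr hq hq0 hq1 hW i)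
    have := min_le_left (cmi q (UU W i) (fun t => (t.2 i).2.2.2) (VV W i)
        - cmi q (UU W i) (fun t => (t.2 i).2.2.1) (VV W i)) 0
    unfold negPartR
    linarith
  have I := block_indep p r hp hr hq (fun _ => True)
  have A1 : ent q (fun t => (W t, suf (fun s => s.2.2.1) n t, pre (fun s => s.2.2.2) n t)) =
      ent q (fun t => (W t, fun j => (t.2 j).2.2.2)) := by
    apply ent_congr hq0 <;> (intro t t' h; simp only [Prod.mk.injEq, funext_iff, Subtype.forall] at h ⊢; grind)
  have A2 : ent q (fun t => pre (fun s => s.2.2.2) n t) = ent q (fun t j => (t.2 j).2.2.2) := by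
    apply ent_congr hq0 <;> (intro t t' h; simp only [Prod.mk.injEq, funext_iff, Subtype.forall] at h ⊢; grind)
  have A3 : ent q (fun t => pre (fun s => s.1) n t) + ent q (fun t => t.1) ≤
      ent q (fun t => (pre (fun s => s.1) n t, W t, t.1, suf (fun s => s.2.2.1) n t)) := by
    apply indep_sub hq0 I <;> (intro t t' h; simp only [Prod.mk.injEq, funext_iff, Subtype.forall] at h ⊢; grind)
  have A4 : ent q (fun t => ((fun j => (t.2 j).1), W t, (fun j => (t.2 j).2.2.2))) ≤
      ent q (fun t => ((fun j => (t.2 j).1), (fun j => (t.2 j).2.2.2))) + ent q (fun t => t.1) := by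
    apply subadd hq0 hq1 <;> (intro t t' h; simp only [Prod.mk.injEq, funext_iff, Subtype.forall] at h ⊢; grind)
  have A5 : ent q (fun t => (pre (fun s => s.1) 0 t, W t, t.1, suf (fun s => s.2.2.1) 0 t)) ≤
      ent q (fun t => (W t, suf (fun s => s.2.2.1) 0 t, pre (fun s => s.2.2.2) 0 t))
       + ent q (fun t => t.1) := by
    apply subadd hq0 hq1 <;> (intro t t' h; simp only [Prod.mk.injEq, funext_iff, Subtype.forall] at h ⊢; grind)
  have A6 : ent q (fun t => pre (fun s => s.1) 0 t) = 0 := by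
    apply ent_const hq1; intro t t'; funext j; exact absurd j.2 (by omega)
  have A7 : ent q (fun t => pre (fun s => s.2.2.2) 0 t) = 0 := by
    apply ent_const hq1; intro t t'; funext j; exact absurd j.2 (by omega)
  unfold cmi at *
  unfold Phi at hsum
  linarith

end core

end SLC

theorem SLC.pmass_comp {Ω E : Type*} [MeasurableSpace Ω] [Fintype E] [MeasurableSpace E]
    [MeasurableSingletonClass E] (μ : Measure Ω) [IsProbabilityMeasure μ] {T : Ω → E}
    (hT : Measurable T) {α : Type*} (F : E → α) (x : α) :
    pmass μ (fun ω => F (T ω)) x = SLC.mass (pmass μ T) F x := by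
  classical
  unfold SLC.mass pmass
  rw [← Finset.sum_filter]
  have : (fun ω => F (T ω)) ⁻¹' {x} = ⋃ t ∈ Finset.univ.filter (fun t => F t = x), T ⁻¹' {t} := by
    ext ω; simp
  rw [this]
  change μ.real _ = ∑ t ∈ _, μ.real _
  rw [measureReal_biUnion_finset]
  · intro a _ b _ hab
    exact Disjoint.preimage T (by simpa using hab)
  · intro t _
    exact hT (measurableSet_singleton t)

theorem SLC.entropy_comp {Ω E : Type*} [MeasurableSpace Ω] [Fintype E] [MeasurableSpace E]
    [MeasurableSingletonClass E] (μ : Measure Ω) [IsProbabilityMeasure μ] {T : Ω → E}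
    (hT : Measurable T) {α : Type*} [Fintype α] (F : E → α) :
    entropyRV μ (fun ω => F (T ω)) = SLC.ent (pmass μ T) F := by
  unfold entropyRV SLC.ent
  simp only [SLC.pmass_comp μ hT F]

theorem SLC.cmi_comp {Ω E : Type*} [MeasurableSpace Ω] [Fintype E] [MeasurableSpace E]
    [MeasurableSingletonClass E] (μ : Measure Ω) [IsProbabilityMeasure μ] {T : Ω → E}
    (hT : Measurable T) {α β γ : Type*} [Fintype α] [Fintype β] [Fintype γ]
    (X : E → α) (Y : E → β) (Z : E → γ) :
    SLC.cmi (pmass μ T) X Y Z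
      = condMutualInfoRV μ (fun ω => X (T ω)) (fun ω => Y (T ω)) (fun ω => Z (T ω)) := by
  unfold condMutualInfoRV SLC.cmi
  rw [← SLC.entropy_comp μ hT, ← SLC.entropy_comp μ hT, ← SLC.entropy_comp μ hT,
    ← SLC.entropy_comp μ hT]

theorem SLC.pmass_sum {Ω E : Type*} [MeasurableSpace Ω] [Fintype E] [MeasurableSpace E]
    [MeasurableSingletonClass E] (μ : Measure Ω) [IsProbabilityMeasure μ] {T : Ω → E}
    (hT : Measurable T) : ∑ t, pmass μ T t = 1 := by
  have h := SLC.pmass_comp μ hT (fun _ => ()) ()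
  have h1 : pmass μ (fun _ : Ω => ()) () = 1 := by simp [pmass]
  rw [h1] at h
  simpa [SLC.mass] using h.symm

/-- **Secrecy-leakage converse bound (small key regime)**: under the converse setup,
`I(X̃ⁿ; W | Zⁿ) ≥ ∑ᵢ ( I(Uᵢ; X̃ᵢ | Zᵢ) + [I(Uᵢ; Zᵢ | Vᵢ) − I(Uᵢ; Yᵢ | Vᵢ)]⁻ ) − H(K)`. -/
theorem secrecy_leakage_converse_small_key
    {𝒳 𝒳t 𝒴 𝒵 𝒲 𝒦 : Type}
    [Fintype 𝒳] [Fintype 𝒳t] [Fintype 𝒴] [Fintype 𝒵] [Fintype 𝒲] [Fintype 𝒦]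
    [MeasurableSpace 𝒳] [DiscreteMeasurableSpace 𝒳]
    [MeasurableSpace 𝒳t] [DiscreteMeasurableSpace 𝒳t]
    [MeasurableSpace 𝒴] [DiscreteMeasurableSpace 𝒴]
    [MeasurableSpace 𝒵] [DiscreteMeasurableSpace 𝒵]
    [MeasurableSpace 𝒲] [DiscreteMeasurableSpace 𝒲]
    [MeasurableSpace 𝒦] [DiscreteMeasurableSpace 𝒦]
    {Ω : Type} [MeasurableSpace Ω] (μ : MeasureTheory.Measure Ω)
    [MeasureTheory.IsProbabilityMeasure μ]
    {n : ℕ} (S : Ω → Fin n → 𝒳t × 𝒳 × 𝒴 × 𝒵) (K : Ω → 𝒦)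
    (hSmeas : Measurable S) (hKmeas : Measurable K)
    (pX : 𝒳 → ℝ) (pXt : 𝒳 → 𝒳t → ℝ) (pYZ : 𝒳 → 𝒴 × 𝒵 → ℝ)
    (hpX0 : ∀ x, 0 ≤ pX x) (hpX1 : ∑ x, pX x = 1)
    (hpXt0 : ∀ x a, 0 ≤ pXt x a) (hpXt1 : ∀ x, ∑ a, pXt x a = 1)
    (hpYZ0 : ∀ x yz, 0 ≤ pYZ x yz) (hpYZ1 : ∀ x, ∑ yz, pYZ x yz = 1)
    (hiid : HasIIDLaw μ S (fun s => pX s.2.1 * pXt s.2.1 s.1 * pYZ s.2.1 s.2.2))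
    (hKunif : UniformRV μ K) (hKind : IndepRV μ K S)
    (enc : (Fin n → 𝒳t) → 𝒦 → 𝒲)
    :
    condMutualInfoRV μ (fun ω => fun j => (S ω j).1)
      (fun ω => enc (fun j => (S ω j).1) (K ω))
      (fun ω => fun j => (S ω j).2.2.2)
    ≥ (∑ i : Fin n,
        (condMutualInfoRV μ
          (fun ω => (enc (fun j => (S ω j).1) (K ω),
          (fun j : {j : Fin n // i < j} => (S ω j.1).2.2.1),
          (fun j : {j : Fin n // j.1 < i} => (S ω j.1).2.2.2),
          (fun j : {j : Fin n // j.1 < i} => (S ω j.1).2.1),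
          K ω))
          (fun ω => (S ω i).1) (fun ω => (S ω i).2.2.2)
        + negPartR (condMutualInfoRV μ
            (fun ω => (enc (fun j => (S ω j).1) (K ω),
          (fun j : {j : Fin n // i < j} => (S ω j.1).2.2.1),
          (fun j : {j : Fin n // j.1 < i} => (S ω j.1).2.2.2),
          (fun j : {j : Fin n // j.1 < i} => (S ω j.1).2.1),
          K ω))
            (fun ω => (S ω i).2.2.2)
            (fun ω => (enc (fun j => (S ω j).1) (K ω),
          (fun j : {j : Fin n // i < j} => (S ω j.1).2.2.1),
          (fun j : {j : Fin n // j.1 < i} => (S ω j.1).2.2.2)))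
          - condMutualInfoRV μ
            (fun ω => (enc (fun j => (S ω j).1) (K ω),
          (fun j : {j : Fin n // i < j} => (S ω j.1).2.2.1),
          (fun j : {j : Fin n // j.1 < i} => (S ω j.1).2.2.2),
          (fun j : {j : Fin n // j.1 < i} => (S ω j.1).2.1),
          K ω))
            (fun ω => (S ω i).2.2.1)
            (fun ω => (enc (fun j => (S ω j).1) (K ω),
          (fun j : {j : Fin n // i < j} => (S ω j.1).2.2.1),
          (fun j : {j : Fin n // j.1 < i} => (S ω j.1).2.2.2))))))
      - entropyRV μ K := by
  have hT : Measurable (fun ω => (K ω, S ω)) := hKmeas.prodMk hSmeas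
  have hp : ∑ s : 𝒳t × 𝒳 × 𝒴 × 𝒵, pX s.2.1 * pXt s.2.1 s.1 * pYZ s.2.1 s.2.2 = 1 := by
    rw [Fintype.sum_prod_type, Finset.sum_comm, Fintype.sum_prod_type]
    have : ∀ x : 𝒳, ∑ yz : 𝒴 × 𝒵, ∑ a, pX x * pXt x a * pYZ x yz = pX x := by
      intro x
      simp [← Finset.sum_mul, ← Finset.mul_sum, hpXt1, hpYZ1]
    simp only [this, hpX1]
  have h := SLC.core (q := pmass μ (fun ω => (K ω, S ω)))
    (fun t => enc (fun j => (t.2 j).1) t.1) _ (pmass μ K) hp (SLC.pmass_sum μ hKmeas)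
    (fun t => by rw [← hiid t.2]; exact hKind t.1 t.2) (fun t => ENNReal.toReal_nonneg)
    (SLC.pmass_sum μ hT)
    (fun t t' h1 h2 => by rw [h1, funext h2])
  simp only [SLC.cmi_comp μ hT, ← SLC.entropy_comp μ hT] at h
  exact h
end
end

section
/- Markov structure of the converse auxiliaries: under the converse setup, for every i ∈ {1,…,n} the chain V_i − U_i − X̃_i − X_i − (Y_i, Z_i) is a Markov chain; in particular, V_i is a deterministic function of U_i, the pair U_i is conditionally independent of (X_i, Y_i, Z_i) given X̃_i, and (U_i, X̃_i) is conditionally independent of (Y_i, Z_i) given X_i. -/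
open MeasureTheory

noncomputable section

open Classical in
lemma pmass_split {Ω : Type*} [MeasurableSpace Ω] (μ : Measure Ω) [IsProbabilityMeasure μ]
    {ρ τ β : Type*} [Fintype ρ] [Fintype τ] (R : Ω → ρ) (T : Ω → τ)
    (hm : ∀ r t, MeasurableSet ((fun ω => (R ω, T ω)) ⁻¹' {(r, t)}))
    (q : ρ → ℝ) (p : τ → ℝ)
    (hl : ∀ r t, pmass μ (fun ω => (R ω, T ω)) (r, t) = q r * p t)
    (F : Ω → β) (y : β) (A : ρ → Prop) (B : τ → Prop)
    (h : ∀ ω, F ω = y ↔ A (R ω) ∧ B (T ω)) :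
    pmass μ F y = (∑ r, if A r then q r else 0) * (∑ t, if B t then p t else 0) := by
  have h1 : F ⁻¹' {y} = (fun ω => (R ω, T ω)) ⁻¹'
      (((Finset.univ : Finset (ρ × τ)).filter (fun z => A z.1 ∧ B z.2) : Finset (ρ × τ)) : Set (ρ × τ)) := by
    ext ω
    simp [h]
  have h2 := sum_measureReal_preimage_singleton (μ := μ)
    ((Finset.univ : Finset (ρ × τ)).filter (fun z => A z.1 ∧ B z.2))
    (f := fun ω => (R ω, T ω)) (fun z _ => hm z.1 z.2) 
  have h3 : pmass μ F y = μ.real (F ⁻¹' {y}) := rfl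
  rw [h3, h1, ← h2, Finset.sum_filter, Fintype.sum_prod_type, Finset.sum_mul_sum]
  refine Finset.sum_congr rfl fun r _ => Finset.sum_congr rfl fun t _ => ?_
  have h4 : μ.real ((fun ω => (R ω, T ω)) ⁻¹' {(r, t)}) = q r * p t := hl r t
  rw [h4]
  by_cases hA : A r <;> by_cases hB : B t <;> simp [hA, hB]

open Classical in
lemma condIndep_first {Ω : Type*} [MeasurableSpace Ω] (μ : Measure Ω) [IsProbabilityMeasure μ]
    {ρ τ υ α γ : Type*} [Fintype ρ] [Fintype τ] (R : Ω → ρ) (T : Ω → τ)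
    (hm : ∀ r t, MeasurableSet ((fun ω => (R ω, T ω)) ⁻¹' {(r, t)}))
    (q : ρ → ℝ) (p : τ → ℝ)
    (hl : ∀ r t, pmass μ (fun ω => (R ω, T ω)) (r, t) = q r * p t)
    (a : τ → α) (c : τ → γ) (g : ρ → α → υ) :
    CondIndepRV μ (fun ω => g (R ω) (a (T ω))) (fun ω => a (T ω)) (fun ω => c (T ω)) := by
  intro u x y
  rw [pmass_split μ R T hm q p hl _ _ (fun r => g r x = u) (fun t => a t = x ∧ c t = y) (by
      intro ω; simp only [Prod.mk.injEq]; grind),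
    pmass_split μ R T hm q p hl (fun ω => a (T ω)) _ (fun r => True) (fun t => a t = x) (by
      intro ω; simp),
    pmass_split μ R T hm q p hl _ _ (fun r => g r x = u) (fun t => a t = x) (by
      intro ω; simp only [Prod.mk.injEq]; grind),
    pmass_split μ R T hm q p hl _ _ (fun r => True) (fun t => a t = x ∧ c t = y) (by
      intro ω; simp only [Prod.mk.injEq]; grind)]
  ring

open Classical in
lemma condIndep_second {Ω : Type*} [MeasurableSpace Ω] (μ : Measure Ω) [IsProbabilityMeasure μ]
    {ρ υ α ξ γ : Type*} [Fintype ρ] [Fintype α] [Fintype ξ] [Fintype γ]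
    (R : Ω → ρ) (T : Ω → α × ξ × γ)
    (hm : ∀ r t, MeasurableSet ((fun ω => (R ω, T ω)) ⁻¹' {(r, t)}))
    (q : ρ → ℝ) (pX : ξ → ℝ) (pA : ξ → α → ℝ) (pC : ξ → γ → ℝ)
    (hA : ∀ x, ∑ a, pA x a = 1) (hC : ∀ x, ∑ a, pC x a = 1)
    (hl : ∀ r t, pmass μ (fun ω => (R ω, T ω)) (r, t)
      = q r * (pX t.2.1 * pA t.2.1 t.1 * pC t.2.1 t.2.2))
    (g : ρ → α → υ) :
    CondIndepRV μ (fun ω => (g (R ω) (T ω).1, (T ω).1)) (fun ω => (T ω).2.1)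
      (fun ω => (T ω).2.2) := by
  rintro ⟨u, a⟩ x y
  rw [pmass_split μ R T hm q _ hl _ _ (fun r => g r a = u)
      (fun t => t.1 = a ∧ t.2.1 = x ∧ t.2.2 = y) (by
      intro ω; simp only [Prod.mk.injEq]; grind),
    pmass_split μ R T hm q _ hl (fun ω => (T ω).2.1) _ (fun r => True) (fun t => t.2.1 = x) (by
      intro ω; simp),
    pmass_split μ R T hm q _ hl _ _ (fun r => g r a = u) (fun t => t.1 = a ∧ t.2.1 = x) (by
      intro ω; simp only [Prod.mk.injEq]; grind),
    pmass_split μ R T hm q _ hl _ _ (fun r => True) (fun t => t.2.1 = x ∧ t.2.2 = y) (by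
      intro ω; simp only [Prod.mk.injEq]; grind)]
  simp only [Fintype.sum_prod_type, ite_and, Finset.sum_ite_eq', Finset.sum_ite_eq,
    Finset.mem_univ, if_true, Finset.sum_ite_irrel, Finset.sum_const_zero,
    ← Finset.mul_sum, ← Finset.sum_mul, hA, hC]
  ring

/-- **Markov structure of the converse auxiliaries**: under the converse setup, for
every `i` the chain `Vᵢ − Uᵢ − X̃ᵢ − Xᵢ − (Yᵢ, Zᵢ)` is a Markov chain: `Vᵢ` is a
deterministic function of `Uᵢ`, `Uᵢ` is conditionally independent of `(Xᵢ, Yᵢ, Zᵢ)`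
given `X̃ᵢ`, and `(Uᵢ, X̃ᵢ)` is conditionally independent of `(Yᵢ, Zᵢ)` given `Xᵢ`. -/
theorem converse_auxiliary_markov_structure
    {𝒳 𝒳t 𝒴 𝒵 𝒲 𝒦 : Type}
    [Fintype 𝒳] [Fintype 𝒳t] [Fintype 𝒴] [Fintype 𝒵] [Fintype 𝒲] [Fintype 𝒦]
    [MeasurableSpace 𝒳] [DiscreteMeasurableSpace 𝒳]
    [MeasurableSpace 𝒳t] [DiscreteMeasurableSpace 𝒳t]
    [MeasurableSpace 𝒴] [DiscreteMeasurableSpace 𝒴]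
    [MeasurableSpace 𝒵] [DiscreteMeasurableSpace 𝒵]
    [MeasurableSpace 𝒲] [DiscreteMeasurableSpace 𝒲]
    [MeasurableSpace 𝒦] [DiscreteMeasurableSpace 𝒦]
    {Ω : Type} [MeasurableSpace Ω] (μ : MeasureTheory.Measure Ω)
    [MeasureTheory.IsProbabilityMeasure μ]
    {n : ℕ} (S : Ω → Fin n → 𝒳t × 𝒳 × 𝒴 × 𝒵) (K : Ω → 𝒦)
    (hSmeas : Measurable S) (hKmeas : Measurable K)
    (pX : 𝒳 → ℝ) (pXt : 𝒳 → 𝒳t → ℝ) (pYZ : 𝒳 → 𝒴 × 𝒵 → ℝ)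
    (hpX0 : ∀ x, 0 ≤ pX x) (hpX1 : ∑ x, pX x = 1)
    (hpXt0 : ∀ x a, 0 ≤ pXt x a) (hpXt1 : ∀ x, ∑ a, pXt x a = 1)
    (hpYZ0 : ∀ x yz, 0 ≤ pYZ x yz) (hpYZ1 : ∀ x, ∑ yz, pYZ x yz = 1)
    (hiid : HasIIDLaw μ S (fun s => pX s.2.1 * pXt s.2.1 s.1 * pYZ s.2.1 s.2.2))
    (hKunif : UniformRV μ K) (hKind : IndepRV μ K S)
    (enc : (Fin n → 𝒳t) → 𝒦 → 𝒲)
    :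
    ∀ i : Fin n,
      (∃ f : 𝒲 × ({j : Fin n // i < j} → 𝒴) × ({j : Fin n // j.1 < i} → 𝒵) ×
            ({j : Fin n // j.1 < i} → 𝒳) × 𝒦 →
            𝒲 × ({j : Fin n // i < j} → 𝒴) × ({j : Fin n // j.1 < i} → 𝒵),
        ∀ ω, (fun ω => (enc (fun j => (S ω j).1) (K ω),
          (fun j : {j : Fin n // i < j} => (S ω j.1).2.2.1),
          (fun j : {j : Fin n // j.1 < i} => (S ω j.1).2.2.2))) ω
          = f ((fun ω => (enc (fun j => (S ω j).1) (K ω),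
          (fun j : {j : Fin n // i < j} => (S ω j.1).2.2.1),
          (fun j : {j : Fin n // j.1 < i} => (S ω j.1).2.2.2),
          (fun j : {j : Fin n // j.1 < i} => (S ω j.1).2.1),
          K ω)) ω)) ∧
      CondIndepRV μ
        (fun ω => (enc (fun j => (S ω j).1) (K ω),
          (fun j : {j : Fin n // i < j} => (S ω j.1).2.2.1),
          (fun j : {j : Fin n // j.1 < i} => (S ω j.1).2.2.2),
          (fun j : {j : Fin n // j.1 < i} => (S ω j.1).2.1),
          K ω))
        (fun ω => (S ω i).1)
        (fun ω => ((S ω i).2.1, (S ω i).2.2.1, (S ω i).2.2.2)) ∧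
      CondIndepRV μ
        (fun ω => ((fun ω => (enc (fun j => (S ω j).1) (K ω),
          (fun j : {j : Fin n // i < j} => (S ω j.1).2.2.1),
          (fun j : {j : Fin n // j.1 < i} => (S ω j.1).2.2.2),
          (fun j : {j : Fin n // j.1 < i} => (S ω j.1).2.1),
          K ω)) ω, (S ω i).1))
        (fun ω => (S ω i).2.1)
        (fun ω => ((S ω i).2.2.1, (S ω i).2.2.2)) := by
  intro i
  classical
  let R : Ω → 𝒦 × ({j : Fin n // j ≠ i} → 𝒳t × 𝒳 × 𝒴 × 𝒵) := fun ω => (K ω, fun j => S ω j.1)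
  let T : Ω → 𝒳t × 𝒳 × 𝒴 × 𝒵 := fun ω => S ω i
  have key : ∀ r t, (fun ω => (R ω, T ω)) ⁻¹' {(r, t)}
      = (fun ω => (K ω, S ω)) ⁻¹' {(r.1, fun j => if h : j = i then t else r.2 ⟨j, h⟩)} := by
    rintro ⟨k, w⟩ t
    ext ω
    simp only [Set.mem_preimage, Set.mem_singleton_iff, Prod.mk.injEq, R, T, funext_iff]
    constructor
    · rintro ⟨⟨h1, h2⟩, h3⟩
      refine ⟨h1, fun j => ?_⟩
      by_cases h : j = i
      · subst h; simpa using h3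
      · simpa [h] using h2 ⟨j, h⟩
    · rintro ⟨h1, h2⟩
      refine ⟨⟨h1, fun j => ?_⟩, ?_⟩
      · simpa [j.2] using h2 j.1
      · simpa using h2 i
  have hm : ∀ r t, MeasurableSet ((fun ω => (R ω, T ω)) ⁻¹' {(r, t)}) := by
    intro r t
    rw [key]
    exact (hKmeas.prodMk hSmeas) (measurableSet_singleton _)
  have hl : ∀ r t, pmass μ (fun ω => (R ω, T ω)) (r, t)
      = (pmass μ K r.1 * ∏ j, (pX (r.2 j).2.1 * pXt (r.2 j).2.1 (r.2 j).1
          * pYZ (r.2 j).2.1 (r.2 j).2.2)) * (pX t.2.1 * pXt t.2.1 t.1 * pYZ t.2.1 t.2.2) := by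
    intro r t
    have h1 : pmass μ (fun ω => (R ω, T ω)) (r, t) = pmass μ (fun ω => (K ω, S ω))
        (r.1, fun j => if h : j = i then t else r.2 ⟨j, h⟩) := by
      unfold pmass
      rw [key]
    rw [h1, hKind, hiid, Fintype.prod_eq_mul_prod_subtype_ne _ i]
    have h2 : ∀ j : {j : Fin n // j ≠ i}, (if h : j.1 = i then t else r.2 ⟨j.1, h⟩) = r.2 j :=
      fun j => dif_neg j.2
    simp only [h2, dite_true]
    ring
  let g : 𝒦 × ({j : Fin n // j ≠ i} → 𝒳t × 𝒳 × 𝒴 × 𝒵) → 𝒳t →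
      𝒲 × ({j : Fin n // i < j} → 𝒴) × ({j : Fin n // j.1 < i} → 𝒵) ×
            ({j : Fin n // j.1 < i} → 𝒳) × 𝒦 := fun r a =>
    (enc (fun j => if h : j = i then a else (r.2 ⟨j, h⟩).1) r.1,
      fun j => (r.2 ⟨j.1, fun h => by have := j.2; rw [h] at this; exact lt_irrefl _ this⟩).2.2.1,
      fun j => (r.2 ⟨j.1, fun h => by have := j.2; rw [h] at this; exact lt_irrefl _ this⟩).2.2.2,
      fun j => (r.2 ⟨j.1, fun h => by have := j.2; rw [h] at this; exact lt_irrefl _ this⟩).2.1,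
      r.1)
  have hU : (fun ω => (enc (fun j => (S ω j).1) (K ω),
          (fun j : {j : Fin n // i < j} => (S ω j.1).2.2.1),
          (fun j : {j : Fin n // j.1 < i} => (S ω j.1).2.2.2),
          (fun j : {j : Fin n // j.1 < i} => (S ω j.1).2.1),
          K ω)) = fun ω => g (R ω) (T ω).1 := by
    funext ω
    have : (fun j => (S ω j).1) = fun j => if h : j = i then (S ω i).1 else (S ω j).1 := by
      funext j
      by_cases h : j = i
      · subst h; simp
      · simp [h]
    simp only [g, R, T]
    rw [this]
  refine ⟨⟨fun u => (u.1, u.2.1, u.2.2.1), fun ω => rfl⟩, ?_, ?_⟩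
  · rw [hU]
    exact condIndep_first μ R T hm _ _ hl (fun t => t.1) (fun t => t.2) g
  · rw [hU]
    exact condIndep_second μ R T hm _ pX pXt pYZ hpXt1 hpYZ1 hl g
end
end
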